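/- Given any irrational α ∈ ℝ ∖ ℚ there is a strictly increasing sequence (k_i) of natural numbers with the following properties. For any C¹-diffeomorphisms f and g of S¹ with rotation number α, any points x, y ∈ S¹, and any ε > 0: (i) for every i the orbit segments {x, …, f^{k_i}(x)} and {y, …, g^{k_i}(y)} are adapted segments; (ii) there is i₀ such that for every i ≥ i₀ there exists a C¹-diffeomorphism g_i of S¹ with: g_i is ε-C¹-close to g; {y, …, g_i^{k_i}(y)} is an adapted orbit segment of g_i, ordered on S¹ in the same way as {x, …, f^{k_i}(x)} and as {y, …, g^{k_i}(y)}; and the initial and final ratios of g_i on the adapted segment {y, …, g_i^{k_i}(y)} are equal to the initial and final ratios of f on the adapted segment {x, …, f^{k_i}(x)}. -/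

import Mathlib

open Set Filter

/-- `inArc a w b` : the point `w` (mod 1) lies strictly inside the positively oriented
open arc of the circle `ℝ/ℤ` from `a` (mod 1) to `b` (mod 1). -/
def inArc (a w b : ℝ) : Prop :=
  0 < Int.fract (w - a) ∧ Int.fract (w - a) < Int.fract (b - a)

/-- A lift of an orientation-preserving `C¹`-diffeomorphism of the circle `S¹ = ℝ/ℤ`:
a `C¹` map `F : ℝ → ℝ` with `F (x+1) = F x + 1` and `F' > 0` everywhere. -/
structure CircleDiffeo where
  toFun : ℝ → ℝ
  contDiff : ContDiff ℝ 1 toFun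
  deriv_pos : ∀ x : ℝ, 0 < deriv toFun x
  commute_translation : ∀ x : ℝ, toFun (x + 1) = toFun x + 1

/-- `f` has rotation number (a lift of) `α`. -/
def hasRotationNumber (f : CircleDiffeo) (α : ℝ) : Prop :=
  Tendsto (fun n : ℕ => f.toFun^[n] 0 / (n : ℝ)) atTop (nhds α)

/-- The `C¹`-distance between (lifts of) circle maps : sup distance between the maps
plus sup distance between the derivatives (computed over a fundamental domain). -/
noncomputable def distC1 (f g : ℝ → ℝ) : ℝ :=
  (⨆ x : Icc (0:ℝ) 1, |f x.1 - g x.1|) + (⨆ x : Icc (0:ℝ) 1, |deriv f x.1 - deriv g x.1|)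

/-- The orbit segment `x, F x, …, F^[n] x` is *adapted*, with final basic interval
`[F^[i] x, F^[j] x]` and initial basic interval `[F^[n-j] x, F^[n-i] x]` (all viewed
on the circle `ℝ/ℤ`). -/
structure IsAdaptedSeg (F : ℝ → ℝ) (x : ℝ) (n i j : ℕ) : Prop where
  hi1 : 1 ≤ i
  hi2 : i ≤ n - 1
  hj1 : 1 ≤ j
  hj2 : j ≤ n - 1
  x_mem : inArc (F^[n - j] x) x (F^[n - i] x)
  x_only : ∀ k ≤ n, inArc (F^[n - j] x) (F^[k] x) (F^[n - i] x) → Int.fract (F^[k] x - x) = 0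
  fn_mem : inArc (F^[i] x) (F^[n] x) (F^[j] x)
  fn_only : ∀ k ≤ n, inArc (F^[i] x) (F^[k] x) (F^[j] x) → Int.fract (F^[k] x - F^[n] x) = 0
  adapted : i + j ≠ n - 1

/-- The initial ratio `R₀ = ℓ([a,x])/ℓ([x,b])` of an adapted orbit segment,
where `a = F^[n-j] x` and `b = F^[n-i] x`. -/
noncomputable def initialRatio (F : ℝ → ℝ) (x : ℝ) (n i j : ℕ) : ℝ :=
  Int.fract (x - F^[n - j] x) / Int.fract (F^[n - i] x - x)

/-- The final ratio `Rₙ = ℓ([c,Fⁿx])/ℓ([Fⁿx,d])` of an adapted orbit segment,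
where `c = F^[i] x` and `d = F^[j] x`. -/
noncomputable def finalRatio (F : ℝ → ℝ) (x : ℝ) (n i j : ℕ) : ℝ :=
  Int.fract (F^[n] x - F^[i] x) / Int.fract (F^[j] x - F^[n] x)

/-- Two finite sequences of points of the circle are similarly ordered: some
orientation-preserving circle homeomorphism (given by its lift `φ`) maps one to the other. -/
def SimilarlyOrdered (p q : ℕ → ℝ) (n : ℕ) : Prop :=
  ∃ φ : ℝ → ℝ, Continuous φ ∧ StrictMono φ ∧ (∀ z : ℝ, φ (z + 1) = φ z + 1) ∧
    ∀ k ≤ n, Int.fract (φ (p k) - q k) = 0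

/-- The (closed) circle arc from `u` to `v` contains no point of the orbit segment
`x, …, F^[n] x` in its interior: it is contained in the closure of a connected
component of the complement of the orbit segment. -/
def NoSegPointInside (F : ℝ → ℝ) (x : ℝ) (n : ℕ) (u v : ℝ) : Prop :=
  ∀ k ≤ n, ¬ inArc u (F^[k] x) v

/-!
Let `p / u < α < q / v` be Farey neighbours. If `u + v` exceeds the length `n` of an orbit segment,
the neighbours of its end points are their images under the `u`-th and `v`-th iterates and their
inverses. As `log Df^n` grows sublinearly, uniformly on the circle, the initial and final ratios of
the segment are `exp (o (n))` when `|u α - p|` and `|v α - q|` are comparable. So are the ratios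
that `f` prescribes and those that `g` has, and their quotient can be distributed over
`m ≈ min u v / 16` steps at each end of the orbit of `g`: at each step the point is pushed inside
the arc between its neighbours so as to multiply the ratio in which it divides this arc by a factor
close to `1`. The arcs of all these steps have disjoint interiors, so the pushes are realised at
once by composing `g` with a diffeomorphism that is `C¹`-close to the identity. Finally, any order
of the points that is that of the rotation orbit makes the segment adapted, with the same basic
intervals.
-/

namespace CircleDiffeo

instance : CoeFun CircleDiffeo fun _ => ℝ → ℝ := ⟨toFun⟩

variable (f : CircleDiffeo) {α : ℝ}

lemma differentiable : Differentiable ℝ f := f.contDiff.differentiable one_ne_zero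

lemma continuous : Continuous f := f.contDiff.continuous

lemma strictMono : StrictMono f := strictMono_of_deriv_pos f.deriv_pos

/-- The monotone degree one lift underlying a circle diffeomorphism. -/
def toCircleDeg1Lift : CircleDeg1Lift where
  toFun := f
  monotone' := f.strictMono.monotone
  map_add_one' := f.commute_translation

lemma coe_toCircleDeg1Lift_pow (n : ℕ) : ⇑(f.toCircleDeg1Lift ^ n) = f^[n] :=
  f.toCircleDeg1Lift.coe_pow n

lemma iterate_add_int (n : ℕ) (x : ℝ) (M : ℤ) : f^[n] (x + M) = f^[n] x + M := by
  simpa only [coe_toCircleDeg1Lift_pow] using (f.toCircleDeg1Lift ^ n).map_add_int x M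

lemma iterate_sub_int (n : ℕ) (x : ℝ) (M : ℤ) : f^[n] (x - M) = f^[n] x - M := by
  simpa only [coe_toCircleDeg1Lift_pow] using (f.toCircleDeg1Lift ^ n).map_sub_int x M

variable {f}

lemma hasRotationNumber_iff :
    hasRotationNumber f α ↔ f.toCircleDeg1Lift.translationNumber = α := by
  have h := f.toCircleDeg1Lift.tendsto_translation_number₀
  simp only [coe_toCircleDeg1Lift_pow] at h
  exact ⟨fun hf => tendsto_nhds_unique h hf, fun hα => hα ▸ h⟩

end CircleDiffeo

/-- The points `q 0, …, q n` of the circle are in the same cyclic order as the points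
`0, α, …, n α`; stated for lifts, the integers standing for the choice of a lift. -/
def IsRotationOrdered (α : ℝ) (q : ℕ → ℝ) (n : ℕ) : Prop :=
  ∀ k ≤ n, ∀ l ≤ n, ∀ M N : ℤ, k * α + M < l * α + N → q k + M < q l + N

lemma eq_and_eq_of_natCast_mul_add_intCast_eq {α : ℝ} (hα : Irrational α) {k l : ℕ} {M N : ℤ}
    (h : k * α + M = l * α + N) : k = l ∧ M = N := by
  have hkl : ((k - l : ℤ) : ℝ) * α = (N - M : ℤ) := by push_cast; linarith
  have hk : (k : ℤ) - l = 0 := by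
    by_contra hne
    exact (hα.intCast_mul hne).ne_int _ hkl
  rw [hk, Int.cast_zero, zero_mul] at hkl
  have hM : N - M = 0 := by exact_mod_cast hkl.symm
  omega

namespace IsRotationOrdered

variable {α : ℝ} {q : ℕ → ℝ} {n : ℕ}

lemma lt_iff (hq : IsRotationOrdered α q n) (hα : Irrational α) {k l : ℕ} (hk : k ≤ n)
    (hl : l ≤ n) {M N : ℤ} : q k + M < q l + N ↔ k * α + M < l * α + N := by
  refine ⟨fun h => ?_, hq k hk l hl M N⟩
  rcases lt_trichotomy (k * α + M) (l * α + N) with hlt | heq | hgt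
  · exact hlt
  · obtain ⟨rfl, rfl⟩ := eq_and_eq_of_natCast_mul_add_intCast_eq hα heq
    exact absurd h (lt_irrefl _)
  · exact absurd h (hq l hl k hk N M hgt).not_gt

end IsRotationOrdered

namespace CircleDiffeo

variable {f : CircleDiffeo} {α : ℝ}

lemma lt_iterate_of_lt_natCast_mul (hf : hasRotationNumber f α) (x : ℝ) {d : ℕ} {M : ℤ}
    (h : M < d * α) : x + M < f^[d] x := by
  have hlt : (M : ℝ) < (f.toCircleDeg1Lift ^ d).translationNumber := by
    rwa [CircleDeg1Lift.translationNumber_pow, hasRotationNumber_iff.1 hf]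
  simpa only [coe_toCircleDeg1Lift_pow] using
    CircleDeg1Lift.lt_map_of_int_lt_translationNumber _ hlt x

lemma iterate_lt_of_natCast_mul_lt (hf : hasRotationNumber f α) (x : ℝ) {d : ℕ} {M : ℤ}
    (h : d * α < M) : f^[d] x < x + M := by
  have hlt : (f.toCircleDeg1Lift ^ d).translationNumber < M := by
    rwa [CircleDeg1Lift.translationNumber_pow, hasRotationNumber_iff.1 hf]
  simpa only [coe_toCircleDeg1Lift_pow] using
    CircleDeg1Lift.map_lt_of_translationNumber_lt_int _ hlt x

lemma isRotationOrdered_iterate (hf : hasRotationNumber f α) (x : ℝ) (n : ℕ) :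
    IsRotationOrdered α (fun k => f^[k] x) n := by
  intro k _ l _ M N h
  rcases le_total k l with hkl | hlk
  · obtain ⟨d, rfl⟩ := Nat.exists_eq_add_of_le' hkl
    have hd : ((M - N : ℤ) : ℝ) < d * α := by push_cast at h ⊢; linarith
    have := lt_iterate_of_lt_natCast_mul hf (f^[k] x) hd
    rw [← Function.iterate_add_apply, Int.cast_sub] at this
    linarith
  · obtain ⟨d, rfl⟩ := Nat.exists_eq_add_of_le' hlk
    have hd : d * α < ((N - M : ℤ) : ℝ) := by push_cast at h ⊢; linarith
    have := iterate_lt_of_natCast_mul_lt hf (f^[l] x) hd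
    rw [← Function.iterate_add_apply, Int.cast_sub] at this
    linarith

lemma iterate_add_lt_iterate_add (hf : hasRotationNumber f α) (x : ℝ) {k l : ℕ} {M N : ℤ}
    (h : k * α + M < l * α + N) : f^[k] x + M < f^[l] x + N :=
  isRotationOrdered_iterate hf x (max k l) k (le_max_left _ _) l (le_max_right _ _) M N h

lemma iterate_add_le_iterate_add (hf : hasRotationNumber f α) (hα : Irrational α) (x : ℝ)
    {k l : ℕ} {M N : ℤ} (h : k * α + M ≤ l * α + N) : f^[k] x + M ≤ f^[l] x + N := by
  rcases h.lt_or_eq with hlt | heq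
  · exact (iterate_add_lt_iterate_add hf x hlt).le
  · obtain ⟨rfl, rfl⟩ := eq_and_eq_of_natCast_mul_add_intCast_eq hα heq
    exact le_rfl

/-- The composition of two circle diffeomorphisms. -/
def comp (f g : CircleDiffeo) : CircleDiffeo where
  toFun := f ∘ g
  contDiff := f.contDiff.comp g.contDiff
  deriv_pos x := by
    rw [deriv_comp x (f.differentiable _) (g.differentiable x)]
    exact mul_pos (f.deriv_pos _) (g.deriv_pos x)
  commute_translation x := by simp only [Function.comp_apply, commute_translation]

/-- The conjugate of a circle diffeomorphism by the reflection `x ↦ -x`. -/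
def refl (f : CircleDiffeo) : CircleDiffeo where
  toFun x := -f (-x)
  contDiff := (f.contDiff.comp contDiff_neg).neg
  deriv_pos x := by
    rw [deriv.fun_neg, deriv_comp_neg, neg_neg]
    exact f.deriv_pos _
  commute_translation x := by
    have := f.commute_translation (-(x + 1))
    rw [show -(x + 1) + 1 = -x by ring] at this
    rw [this]
    ring

lemma refl_iterate (f : CircleDiffeo) (n : ℕ) (x : ℝ) : f.refl^[n] x = -f^[n] (-x) := by
  induction n with
  | zero => simp
  | succ n ih =>
    rw [Function.iterate_succ_apply', Function.iterate_succ_apply', ih]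
    simp only [refl, neg_neg]

lemma hasRotationNumber_refl (hf : hasRotationNumber f α) : hasRotationNumber f.refl (-α) := by
  refine hf.neg.congr fun n => ?_
  rw [refl_iterate, neg_zero, neg_div]

end CircleDiffeo

/-- A pair of Farey neighbours `p / u < α < q / v`, that is, with `u q - v p = 1`. The times `u`
and `v` are return times of the rotation by `α` from the right and from the left respectively. -/
structure FareyPair (α : ℝ) where
  u : ℕ
  v : ℕ
  p : ℤ
  q : ℤ
  u_pos : 0 < u
  v_pos : 0 < v
  p_lt : p < u * α
  lt_q : v * α < q
  det : u * q - v * p = 1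

namespace FareyPair

variable {α : ℝ} (F : FareyPair α)

/-- The displacement of the rotation by `α` at its right return time `u`. -/
noncomputable def upGap : ℝ := F.u * α - F.p

/-- The opposite of the displacement of the rotation by `α` at its left return time `v`. -/
noncomputable def downGap : ℝ := F.q - F.v * α

lemma upGap_pos : 0 < F.upGap := sub_pos.2 F.p_lt

lemma downGap_pos : 0 < F.downGap := sub_pos.2 F.lt_q

/-- The Farey pair of `-α` obtained by reflection. -/
def neg : FareyPair (-α) where
  u := F.v
  v := F.u
  p := -F.q
  q := -F.p
  u_pos := F.v_pos
  v_pos := F.u_pos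
  p_lt := by push_cast; linarith [F.lt_q]
  lt_q := by push_cast; linarith [F.p_lt]
  det := by linarith [F.det]

/-- The inverse of `FareyPair.neg`. -/
def ofNeg (F : FareyPair (-α)) : FareyPair α where
  u := F.v
  v := F.u
  p := -F.q
  q := -F.p
  u_pos := F.v_pos
  v_pos := F.u_pos
  p_lt := by push_cast; linarith [F.lt_q]
  lt_q := by push_cast; linarith [F.p_lt]
  det := by linarith [F.det]

lemma upGap_neg : F.neg.upGap = F.downGap := by
  simp only [upGap, downGap, neg]; push_cast; ring

lemma downGap_neg : F.neg.downGap = F.upGap := by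
  simp only [upGap, downGap, neg]; push_cast; ring

/-- The Farey pair whose right end is the `c`-th mediant of the right end towards the left end. -/
def addV (c : ℕ) (h : c * F.upGap < F.downGap) : FareyPair α where
  u := F.u
  v := F.v + c * F.u
  p := F.p
  q := F.q + c * F.p
  u_pos := F.u_pos
  v_pos := Nat.add_pos_left F.v_pos _
  p_lt := F.p_lt
  lt_q := by simp only [upGap, downGap] at h; push_cast; linarith
  det := by push_cast; linarith [F.det]

/-- The Farey pair whose left end is the `c`-th mediant of the left end towards the right end. -/
def addU (c : ℕ) (h : c * F.downGap < F.upGap) : FareyPair α where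
  u := F.u + c * F.v
  v := F.v
  p := F.p + c * F.q
  q := F.q
  u_pos := Nat.add_pos_left F.u_pos _
  v_pos := F.v_pos
  p_lt := by simp only [upGap, downGap] at h; push_cast; linarith
  lt_q := F.lt_q
  det := by push_cast; linarith [F.det]

lemma upGap_addV (c : ℕ) (h : c * F.upGap < F.downGap) : (F.addV c h).upGap = F.upGap := rfl

lemma downGap_addV (c : ℕ) (h : c * F.upGap < F.downGap) :
    (F.addV c h).downGap = F.downGap - c * F.upGap := by
  simp only [upGap, downGap, addV]; push_cast; ring

lemma upGap_addU (c : ℕ) (h : c * F.downGap < F.upGap) :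
    (F.addU c h).upGap = F.upGap - c * F.downGap := by
  simp only [upGap, downGap, addU]; push_cast; ring

lemma downGap_addU (c : ℕ) (h : c * F.downGap < F.upGap) : (F.addU c h).downGap = F.downGap := rfl

lemma u_mul_downGap_add_v_mul_upGap : F.u * F.downGap + F.v * F.upGap = 1 := by
  have hdet : (F.u : ℝ) * F.q - F.v * F.p = 1 := by exact_mod_cast F.det
  simp only [upGap, downGap]
  linarith

lemma one_le_u : (1 : ℝ) ≤ F.u := by exact_mod_cast F.u_pos

lemma one_le_v : (1 : ℝ) ≤ F.v := by exact_mod_cast F.v_pos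

lemma upGap_add_downGap_le_one : F.upGap + F.downGap ≤ 1 := by
  nlinarith [F.u_mul_downGap_add_v_mul_upGap, F.upGap_pos, F.downGap_pos, F.one_le_u, F.one_le_v]

lemma upGap_add_downGap_lt_one (hu : 2 ≤ F.u) : F.upGap + F.downGap < 1 := by
  have hu' : (2 : ℝ) ≤ F.u := by exact_mod_cast hu
  nlinarith [F.u_mul_downGap_add_v_mul_upGap, F.upGap_pos, F.downGap_pos, F.one_le_v]

/-- Since `(u, -p)` and `(v, -q)` form a basis of `ℤ²`, every `(l, M)` has coordinates `s`, `t` in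
it; these have opposite signs when `l` is smaller than `u + v`. -/
lemma exists_coordinates {l : ℤ} (hl : 0 < l) (hl' : l < F.u + F.v) (M : ℤ) :
    ∃ s t : ℤ, l = s * F.u + t * F.v ∧ l * α + M = s * F.upGap - t * F.downGap ∧
      (1 ≤ s ∧ t ≤ 0 ∨ s ≤ 0 ∧ 1 ≤ t) := by
  have hu : (0 : ℤ) < F.u := by exact_mod_cast F.u_pos
  have hv : (0 : ℤ) < F.v := by exact_mod_cast F.v_pos
  have hl_eq : l = (l * F.q + M * F.v) * F.u + (-(F.u * M) - l * F.p) * F.v := by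
    linear_combination -l * F.det
  have hM_eq : -M = (l * F.q + M * F.v) * F.p + (-(F.u * M) - l * F.p) * F.q := by
    linear_combination M * F.det
  generalize l * F.q + M * F.v = s at hl_eq hM_eq
  generalize -(F.u * M) - l * F.p = t at hl_eq hM_eq
  have hM_eq' : -(M : ℝ) = s * F.p + t * F.q := by exact_mod_cast hM_eq
  refine ⟨s, t, hl_eq, ?_, ?_⟩
  · rw [hl_eq, upGap, downGap]
    push_cast
    linear_combination -hM_eq'
  · rcases le_or_gt s 0 with hs | hs <;> rcases le_or_gt t 0 with ht | ht
    · nlinarith [hu, hv]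
    · exact Or.inr ⟨hs, ht⟩
    · exact Or.inl ⟨hs, ht⟩
    · nlinarith [hu, hv]

lemma upGap_le_or_le_neg_downGap {l : ℤ} (hl : 0 < l) (hl' : l < F.u + F.v) (M : ℤ) :
    F.upGap ≤ l * α + M ∨ l * α + M ≤ -F.downGap := by
  obtain ⟨s, t, -, hD, ⟨hs, ht⟩ | ⟨hs, ht⟩⟩ := F.exists_coordinates hl hl' M <;>
    rify at hs ht
  · exact Or.inl (by nlinarith [F.upGap_pos, F.downGap_pos])
  · exact Or.inr (by nlinarith [F.upGap_pos, F.downGap_pos])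

lemma upGap_le_abs {l : ℤ} (hl : 0 < l) (hlv : l < F.v) (M : ℤ) : F.upGap ≤ |l * α + M| := by
  obtain ⟨s, t, hl_eq, hD, ⟨hs, ht⟩ | ⟨_, ht⟩⟩ := F.exists_coordinates hl (by omega) M
  · rify at hs ht
    exact le_abs.2 (Or.inl (by nlinarith [F.upGap_pos, F.downGap_pos]))
  · have hs' : s ≤ -1 := by
      by_contra! h
      nlinarith
    rify at hs' ht
    exact le_abs.2 (Or.inr (by nlinarith [F.upGap_pos, F.downGap_pos]))

lemma upGap_add_downGap_le_abs {l : ℤ} (hl : 0 < l) (hlu : l < F.u) (hlv : l < F.v) (M : ℤ) :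
    F.upGap + F.downGap ≤ |l * α + M| := by
  obtain ⟨s, t, hl_eq, hD, ⟨hs, _⟩ | ⟨_, ht⟩⟩ := F.exists_coordinates hl (by omega) M
  · have ht' : t ≤ -1 := by
      by_contra! h
      nlinarith
    rify at hs ht'
    exact le_abs.2 (Or.inl (by nlinarith [F.upGap_pos, F.downGap_pos]))
  · have hs' : s ≤ -1 := by
      by_contra! h
      nlinarith
    rify at hs' ht
    exact le_abs.2 (Or.inr (by nlinarith [F.upGap_pos, F.downGap_pos]))

lemma two_mul_upGap_le_or_le_neg_two_mul_downGap {l : ℤ} (hlu : F.u < l) (hlv : F.v < l)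
    (hl : l < F.u + F.v) (M : ℤ) :
    2 * F.upGap ≤ l * α + M ∨ l * α + M ≤ -(2 * F.downGap) := by
  obtain ⟨s, t, hl_eq, hD, ⟨_, ht⟩ | ⟨hs, _⟩⟩ := F.exists_coordinates (by omega) hl M
  · have hs' : 2 ≤ s := by
      by_contra! h
      nlinarith
    rify at hs' ht
    exact Or.inl (by nlinarith [F.upGap_pos, F.downGap_pos])
  · have ht' : 2 ≤ t := by
      by_contra! h
      nlinarith
    rify at hs ht'
    exact Or.inr (by nlinarith [F.upGap_pos, F.downGap_pos])

lemma natCast_mul_downGap_ne (hα : Irrational α) {c c' : ℕ} (hc : 0 < c) :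
    c * F.downGap ≠ c' * F.upGap := by
  intro h
  simp only [upGap, downGap] at h
  have heq : ((c * F.v + c' * F.u : ℕ) : ℝ) * α + (0 : ℤ) =
      (0 : ℕ) * α + (c * F.q + c' * F.p : ℤ) := by
    push_cast
    linarith
  have hzero := (eq_and_eq_of_natCast_mul_add_intCast_eq hα heq).1
  have hpos := Nat.mul_pos hc F.v_pos
  omega

lemma exists_downGap_sub_mul_lt (hα : Irrational α) (h : F.upGap < F.downGap) :
    ∃ c : ℕ, F.upGap < F.downGap - c * F.upGap ∧ F.downGap - c * F.upGap < 2 * F.upGap := by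
  have hup := F.upGap_pos
  have hone : 1 ≤ ⌊F.downGap / F.upGap⌋₊ := by
    rw [Nat.one_le_floor_iff, le_div_iff₀ hup]
    linarith
  obtain ⟨c, hc⟩ := Nat.exists_eq_add_of_le' hone
  have hle := Nat.floor_le (div_pos F.downGap_pos hup).le
  have hlt := Nat.lt_floor_add_one (F.downGap / F.upGap)
  rw [hc, le_div_iff₀ hup] at hle
  rw [hc, div_lt_iff₀ hup] at hlt
  have hne := F.natCast_mul_downGap_ne hα (c := 1) (c' := c + 1) one_pos
  rw [Nat.cast_one, one_mul] at hne
  have hlt' := lt_of_le_of_ne hle hne.symm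
  push_cast at hlt hlt'
  exact ⟨c, by linarith, by linarith⟩

/-- The Farey pair formed by two consecutive integers. -/
noncomputable def floorPair (hα : Irrational α) : FareyPair α where
  u := 1
  v := 1
  p := ⌊α⌋
  q := ⌊α⌋ + 1
  u_pos := one_pos
  v_pos := one_pos
  p_lt := by
    rw [Nat.cast_one, one_mul]
    exact lt_of_le_of_ne (Int.floor_le α) (hα.ne_int _).symm
  lt_q := by
    rw [Nat.cast_one, one_mul]
    exact_mod_cast Int.lt_floor_add_one α
  det := by push_cast; ring

lemma exists_larger_comparable_of_upGap_lt (hα : Irrational α) (h : F.upGap < F.downGap) :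
    ∃ F' : FareyPair α, F.u < F'.u ∧ F.v < F'.v ∧ F'.u ≤ 2 * F'.v ∧ F'.v ≤ 2 * F'.u := by
  obtain ⟨c, hc, hc'⟩ := F.exists_downGap_sub_mul_lt hα h
  have hV : ((c + 1 : ℕ) : ℝ) * F.upGap < F.downGap := by push_cast; linarith
  have hU : ((1 : ℕ) : ℝ) * (F.addV (c + 1) hV).downGap < (F.addV (c + 1) hV).upGap := by
    rw [downGap_addV, upGap_addV]
    push_cast
    linarith
  have hu := F.u_pos
  have hv := F.v_pos
  refine ⟨(F.addV (c + 1) hV).addU 1 hU, ?_, ?_, ?_, ?_⟩ <;> simp only [addU, addV] <;>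
    nlinarith [Nat.zero_le (c * F.u)]

lemma exists_larger_comparable (hα : Irrational α) :
    ∃ F' : FareyPair α, F.u < F'.u ∧ F.v < F'.v ∧ F'.u ≤ 2 * F'.v ∧ F'.v ≤ 2 * F'.u := by
  have hne : F.downGap ≠ F.upGap := by
    simpa only [Nat.cast_one, one_mul] using
      F.natCast_mul_downGap_ne hα (c := 1) (c' := 1) one_pos
  rcases hne.lt_or_gt with h | h
  · obtain ⟨F', hv, hu, hvu, huv⟩ := F.neg.exists_larger_comparable_of_upGap_lt hα.neg
      (by rwa [upGap_neg, downGap_neg])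
    exact ⟨F'.ofNeg, hu, hv, huv, hvu⟩
  · exact F.exists_larger_comparable_of_upGap_lt hα h

end FareyPair

lemma exists_comparable_fareyPair {α : ℝ} (hα : Irrational α) (N : ℕ) :
    ∃ F : FareyPair α, N ≤ F.u ∧ N ≤ F.v ∧ F.u ≤ 2 * F.v ∧ F.v ≤ 2 * F.u := by
  induction N with
  | zero => exact ⟨.floorPair hα, by simp [FareyPair.floorPair]⟩
  | succ N ih =>
    obtain ⟨F, hu, hv, -, -⟩ := ih
    obtain ⟨F', hu', hv', hF'⟩ := F.exists_larger_comparable hα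
    exact ⟨F', by omega, by omega, hF'⟩

namespace FareyPair

variable {α : ℝ} (F : FareyPair α)

/-- The gaps of the Farey pair are comparable, the gap at `u` being the smaller one, and `u` is at
most comparable to `v`. -/
structure UpBalanced : Prop where
  upGap_lt : F.upGap < F.downGap
  downGap_lt : F.downGap < 2 * F.upGap
  u_le : F.u ≤ 2 * F.v

/-- The gaps of the Farey pair are comparable, in the sense of `FareyPair.UpBalanced` up to
reflection. -/
def Balanced : Prop := F.UpBalanced ∨ F.neg.UpBalanced

lemma exists_larger_balanced_of_upGap_lt (hα : Irrational α) (h : F.upGap < F.downGap) :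
    ∃ F' : FareyPair α, F.u ≤ F'.u ∧ F.v ≤ F'.v ∧ F'.Balanced := by
  obtain ⟨c, hc, hc'⟩ := F.exists_downGap_sub_mul_lt hα h
  have hV : c * F.upGap < F.downGap := by linarith
  by_cases hu : F.u ≤ F.v + c * F.u
  · exact ⟨F.addV c hV, le_rfl, Nat.le_add_right _ _, Or.inl
      ⟨by rwa [downGap_addV], by rwa [downGap_addV], by simp only [addV]; omega⟩⟩
  obtain rfl : c = 0 := by
    by_contra hc0
    have := Nat.le_mul_of_pos_left F.u (Nat.pos_of_ne_zero hc0)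
    omega
  rw [Nat.cast_zero, zero_mul, sub_zero] at hc'
  set F₁ := F.addV 1 (by simpa using h) with hF₁
  have hgap : F₁.downGap = F.downGap - F.upGap := by rw [hF₁, downGap_addV, Nat.cast_one, one_mul]
  obtain ⟨d, hd, hd'⟩ := F₁.neg.exists_downGap_sub_mul_lt hα.neg (by
    rw [upGap_neg, downGap_neg, hgap, hF₁, upGap_addV]
    linarith)
  rw [upGap_neg, downGap_neg] at hd hd'
  have hU : d * F₁.downGap < F₁.upGap := by linarith [F₁.downGap_pos]
  refine ⟨F₁.addU d hU, Nat.le_add_right _ _, Nat.le_add_right _ _, Or.inr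
    ⟨?_, ?_, ?_⟩⟩
  · rwa [upGap_neg, downGap_neg, upGap_addU, downGap_addU]
  · rwa [upGap_neg, downGap_neg, upGap_addU, downGap_addU]
  · simp only [neg, addU, hF₁, addV]
    nlinarith [Nat.zero_le (d * (F.v + 1 * F.u))]

lemma balanced_ofNeg {F : FareyPair (-α)} (h : F.Balanced) : F.ofNeg.Balanced := by
  have hup : F.ofNeg.upGap = F.downGap := by simp only [upGap, downGap, ofNeg]; push_cast; ring
  have hdown : F.ofNeg.downGap = F.upGap := by simp only [upGap, downGap, ofNeg]; push_cast; ring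
  rcases h with h | h
  · exact Or.inr ⟨by rw [upGap_neg, downGap_neg, hup, hdown]; exact h.upGap_lt,
      by rw [upGap_neg, downGap_neg, hup, hdown]; exact h.downGap_lt, h.u_le⟩
  · have h₁ := h.upGap_lt
    have h₂ := h.downGap_lt
    rw [upGap_neg, downGap_neg] at h₁ h₂
    exact Or.inl ⟨by rwa [hup, hdown], by rwa [hup, hdown], h.u_le⟩

end FareyPair

lemma exists_balanced_fareyPair {α : ℝ} (hα : Irrational α) (N : ℕ) :
    ∃ F : FareyPair α, N ≤ F.u ∧ N ≤ F.v ∧ F.Balanced := by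
  obtain ⟨F, hu, hv, -, -⟩ := exists_comparable_fareyPair hα N
  have hne : F.downGap ≠ F.upGap := by
    simpa only [Nat.cast_one, one_mul] using
      F.natCast_mul_downGap_ne hα (c := 1) (c' := 1) one_pos
  rcases hne.lt_or_gt with h | h
  · obtain ⟨F', hu', hv', hF'⟩ := F.neg.exists_larger_balanced_of_upGap_lt hα.neg
      (by rwa [FareyPair.upGap_neg, FareyPair.downGap_neg])
    exact ⟨F'.ofNeg, hu.trans hv', hv.trans hu', FareyPair.balanced_ofNeg hF'⟩
  · obtain ⟨F', hu', hv', hF'⟩ := F.exists_larger_balanced_of_upGap_lt hα h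
    exact ⟨F', hu.trans hu', hv.trans hv', hF'⟩

namespace FareyPair

/-- A time `n` at which the last point of every orbit segment of rotation number `α` has the
neighbours of times `n - u` and `n - v`, leaving `m` free steps, a fixed proportion
of `min u v`, at both ends of the segment. -/
structure IsCharacteristic {α : ℝ} (F : FareyPair α) (n m : ℕ) : Prop where
  balanced : F.Balanced
  u_add_lt : F.u + 2 * m < n
  v_add_lt : F.v + 2 * m < n
  lt_u_add_v : n + 1 < F.u + F.v
  min_le : min F.u F.v ≤ 40 * m

end FareyPair

lemma exists_characteristic_times {α : ℝ} (hα : Irrational α) : ∃ k : ℕ → ℕ, StrictMono k ∧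
    ∀ i, ∃ F : FareyPair α, ∃ m : ℕ, F.IsCharacteristic (k i) m ∧ i ≤ m := by
  refine extraction_forall_of_frequently
    (P := fun i n => ∃ F : FareyPair α, ∃ m : ℕ, F.IsCharacteristic n m ∧ i ≤ m) fun i => ?_
  rw [frequently_atTop]
  intro N
  obtain ⟨F, hu, hv, hF⟩ := exists_balanced_fareyPair hα (100 + 16 * i + N)
  exact ⟨max F.u F.v + min F.u F.v / 2, by omega, F, min F.u F.v / 16,
    ⟨hF, by omega, by omega, by omega, by omega⟩, by omega⟩

/-- The arcs of the circle with lifts `[a k, b k]`, `k ∈ s`, have pairwise disjoint interiors. For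
`k = l` this says that the interior of each arc embeds in the circle. -/
def ArcsDisjoint {ι : Type*} (s : Set ι) (a b : ι → ℝ) : Prop :=
  ∀ k ∈ s, ∀ l ∈ s, ∀ M : ℤ, (k = l → M ≠ 0) → b k ≤ a l + M ∨ b l + M ≤ a k

namespace ArcsDisjoint

variable {ι : Type*} {a b a' b' : ι → ℝ}

lemma mono {s : Set ι} (h : ArcsDisjoint s a b) (ha : ∀ k ∈ s, a k ≤ a' k)
    (hb : ∀ k ∈ s, b' k ≤ b k) : ArcsDisjoint s a' b' := fun k hk l hl M hM =>
  (h k hk l hl M hM).imp (fun h' => by linarith [ha l hl, hb k hk])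
    fun h' => by linarith [ha k hk, hb l hl]

lemma sum_sub_le_one {s : Finset ι} (h : ArcsDisjoint (s : Set ι) a b)
    (hab : ∀ k ∈ s, a k ≤ b k) : ∑ k ∈ s, (b k - a k) ≤ 1 := by
  have hvol : MeasureTheory.volume (⋃ k ∈ s, Ioo (a k) (b k)) =
      ENNReal.ofReal (∑ k ∈ s, (b k - a k)) := by
    rw [MeasureTheory.measure_biUnion_finset (fun k hk l hl hkl => ?_) fun _ _ => measurableSet_Ioo,
      ENNReal.ofReal_sum_of_nonneg fun k hk => sub_nonneg.2 (hab k hk)]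
    · simp only [Real.volume_Ioo]
    · refine Set.disjoint_left.2 fun z ⟨hz₁, hz₂⟩ ⟨hz₃, hz₄⟩ => ?_
      rcases h k hk l hl 0 (fun hkl' => absurd hkl' hkl) with h' | h' <;>
        · rw [Int.cast_zero, add_zero] at h'
          linarith
  by_contra! hlt
  obtain ⟨x, hx, y, hy, g, hg, hxy⟩ :=
    (isAddFundamentalDomain_Ioc one_pos 0).exists_ne_zero_vadd_eq
      (Finset.nullMeasurableSet_biUnion s fun k _ => measurableSet_Ioo.nullMeasurableSet)
      (by
        rw [hvol, Real.volume_Ioc, zero_add, sub_zero, ENNReal.ofReal_lt_ofReal_iff (by linarith)]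
        exact hlt)
  obtain ⟨M, hM⟩ := AddSubgroup.mem_zmultiples_iff.1 g.2
  simp only [mem_iUnion, mem_Ioo, exists_prop] at hx hy
  obtain ⟨k, hk, hxk⟩ := hx
  obtain ⟨l, hl, hyl⟩ := hy
  have hy_eq : y = M + x := by
    rw [← hxy, AddSubgroup.vadd_def, ← hM, zsmul_one, vadd_eq_add]
  have hM0 : -M ≠ 0 := by
    rintro h0
    refine hg (Subtype.ext ?_)
    rw [← hM, neg_eq_zero.1 h0, zero_zsmul, ZeroMemClass.coe_zero]
  rcases h k hk l hl (-M) fun _ => hM0 with h' | h' <;>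
    · push_cast at h'
      linarith

end ArcsDisjoint

namespace CircleDiffeo

variable {f : CircleDiffeo} {α : ℝ}

/-- The point `f^[k] x + M` of the lifted orbit of `x`, for `a = (k, M)`. -/
def orbitPt (f : CircleDiffeo) (x : ℝ) (a : ℕ × ℤ) : ℝ := f^[a.1] x + a.2

/-- The point `k α + M` of the lifted orbit of the origin under the rotation by `α`, for
`a = (k, M)`. -/
noncomputable def rotationPt (α : ℝ) (a : ℕ × ℤ) : ℝ := a.1 * α + a.2

lemma orbitPt_le_orbitPt (hf : hasRotationNumber f α) (hα : Irrational α) (x : ℝ) {a b : ℕ × ℤ}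
    (h : rotationPt α a ≤ rotationPt α b) : f.orbitPt x a ≤ f.orbitPt x b :=
  iterate_add_le_iterate_add hf hα x h

lemma orbitPt_le_orbitPt_add (hf : hasRotationNumber f α) (hα : Irrational α) (x : ℝ)
    {a b : ℕ × ℤ} {M : ℤ} (h : rotationPt α a ≤ rotationPt α b + M) :
    f.orbitPt x a ≤ f.orbitPt x b + M := by
  simpa only [orbitPt, Int.cast_add, add_assoc] using
    orbitPt_le_orbitPt hf hα x (b := (b.1, b.2 + M)) (by
      simpa only [rotationPt, Int.cast_add, add_assoc] using h)

lemma arcsDisjoint_orbitPt (hf : hasRotationNumber f α) (hα : Irrational α) (x : ℝ) {ι : Type*}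
    {s : Set ι} {a b : ι → ℕ × ℤ}
    (h : ArcsDisjoint s (fun k => rotationPt α (a k)) fun k => rotationPt α (b k)) :
    ArcsDisjoint s (fun k => f.orbitPt x (a k)) fun k => f.orbitPt x (b k) := by
  refine fun k hk l hl M hM => (h k hk l hl M hM).imp (orbitPt_le_orbitPt_add hf hα x)
    fun (h' : rotationPt α (b l) + M ≤ rotationPt α (a k)) => ?_
  have := orbitPt_le_orbitPt_add hf hα x (a := b l) (b := a k) (M := -M) (by push_cast; linarith)
  push_cast at this
  exact le_sub_iff_add_le.1 (this.trans_eq (sub_eq_add_neg _ _).symm)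

end CircleDiffeo

namespace FareyPair

variable {α : ℝ} (F : FareyPair α) (f : CircleDiffeo)

/-- The lift `f^[u] - p` of the right return map. -/
noncomputable def up (w : ℝ) : ℝ := f^[F.u] w - F.p

/-- The lift `f^[v] - q` of the left return map. -/
noncomputable def down (w : ℝ) : ℝ := f^[F.v] w - F.q

lemma up_neg (w : ℝ) : F.neg.up f.refl w = -F.down f (-w) := by
  simp only [up, down, neg, CircleDiffeo.refl_iterate]
  push_cast
  ring

lemma down_neg (w : ℝ) : F.neg.down f.refl w = -F.up f (-w) := by
  simp only [up, down, neg, CircleDiffeo.refl_iterate]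
  push_cast
  ring

lemma iterate_up (k : ℕ) (w : ℝ) : f^[k] (F.up f w) = F.up f (f^[k] w) := by
  simp only [up, CircleDiffeo.iterate_sub_int, ← Function.iterate_add_apply, add_comm]

lemma strictMono_down : StrictMono (F.down f) := fun _ _ h =>
  sub_lt_sub_right (f.strictMono.iterate F.v h) _

variable {f}

lemma lt_up (hf : hasRotationNumber f α) (w : ℝ) : w < F.up f w := by
  have := CircleDiffeo.lt_iterate_of_lt_natCast_mul hf w F.p_lt
  rw [up]
  linarith

lemma down_lt (hf : hasRotationNumber f α) (w : ℝ) : F.down f w < w := by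
  have := CircleDiffeo.iterate_lt_of_natCast_mul_lt hf w F.lt_q
  rw [down]
  linarith

end FareyPair

lemma le_abs_mul_add_intCast {α c : ℝ} {N : ℤ} (hc : c ≤ 1)
    (h : ∀ l : ℤ, 0 < l → l < N → ∀ M : ℤ, c ≤ |l * α + M|) {l M : ℤ} (hl : |l| < N)
    (hM : l = 0 → M ≠ 0) : c ≤ |l * α + M| := by
  rw [abs_lt] at hl
  rcases lt_trichotomy l 0 with hneg | rfl | hpos
  · have := h (-l) (by omega) (by omega) (-M)
    push_cast at this
    rwa [← abs_neg, neg_add, ← neg_mul]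
  · rw [Int.cast_zero, zero_mul, zero_add]
    exact hc.trans (by exact_mod_cast Int.one_le_abs (hM rfl))
  · exact h l hpos hl.2 M

namespace FareyPair

variable {α : ℝ} (F : FareyPair α) {f : CircleDiffeo}

lemma upGap_le_one : F.upGap ≤ 1 := by
  linarith [F.upGap_add_downGap_le_one, F.downGap_pos]

lemma arcsDisjoint_rotationPt : ArcsDisjoint (Iio F.v)
    (fun k => CircleDiffeo.rotationPt α (k, 0))
    fun k => CircleDiffeo.rotationPt α (k + F.u, -F.p) := by
  intro k hk l hl M hM
  rw [mem_Iio] at hk hl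
  have hgap : F.upGap ≤ |((k - l : ℤ) : ℝ) * α + (-M : ℤ)| :=
    le_abs_mul_add_intCast F.upGap_le_one (fun _ h h' M => F.upGap_le_abs h h' M)
      (abs_lt.2 (by omega)) (by omega)
  simp only [CircleDiffeo.rotationPt]
  push_cast at hgap ⊢
  rw [upGap] at hgap
  rcases le_abs.1 hgap with h | h
  · exact Or.inr (by linarith)
  · exact Or.inl (by linarith)

lemma sum_up_sub_le_one (hα : Irrational α) (hf : hasRotationNumber f α) {K : ℕ} (hK : K ≤ F.v)
    (w : ℝ) : ∑ k ∈ Finset.range K, (F.up f (f^[k] w) - f^[k] w) ≤ 1 := by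
  refine ArcsDisjoint.sum_sub_le_one (a := fun k => f^[k] w) (b := fun k => F.up f (f^[k] w))
    (fun k hk l hl => ?_) fun k _ => (F.lt_up hf _).le
  rw [Finset.coe_range, mem_Iio] at hk hl
  have := CircleDiffeo.arcsDisjoint_orbitPt hf hα w F.arcsDisjoint_rotationPt
    k (hk.trans_le hK) l (hl.trans_le hK)
  simpa only [CircleDiffeo.orbitPt, Int.cast_zero, add_zero, Int.cast_neg, ← sub_eq_add_neg,
    add_comm _ F.u, Function.iterate_add_apply, up] using this

lemma sum_up_sub_le_two (hα : Irrational α) (hf : hasRotationNumber f α) {K : ℕ}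
    (hK : K ≤ 2 * F.v) (w : ℝ) :
    ∑ k ∈ Finset.range K, (F.up f (f^[k] w) - f^[k] w) ≤ 2 := by
  rcases le_total K F.v with hKv | hvK
  · linarith [F.sum_up_sub_le_one hα hf hKv w]
  · obtain ⟨d, rfl⟩ := Nat.exists_eq_add_of_le hvK
    have hd := F.sum_up_sub_le_one hα hf (K := d) (by omega) (f^[F.v] w)
    simp only [← Function.iterate_add_apply, add_comm _ F.v] at hd
    rw [Finset.sum_range_add]
    linarith [F.sum_up_sub_le_one hα hf le_rfl w]

end FareyPair

lemma uniformContinuous_of_periodic {φ : ℝ → ℝ} {c : ℝ} (hc : 0 < c)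
    (hper : Function.Periodic φ c) (hφ : Continuous φ) : UniformContinuous φ := by
  have : Fact (0 < c) := ⟨hc⟩
  have hlift : Continuous (hper.lift : AddCircle c → ℝ) := continuous_quot_lift _ hφ
  have hcoe : UniformContinuous ((↑) : ℝ → AddCircle c) :=
    uniformContinuous_of_continuousAt_zero (QuotientAddGroup.mk' (AddSubgroup.zmultiples c))
      (AddCircle.continuous_mk' c).continuousAt
  exact (CompactSpace.uniformContinuous_of_continuous hlift).comp hcoe

lemma exists_abs_sub_le_add_mul {φ : ℝ → ℝ} (huc : UniformContinuous φ) {B : ℝ}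
    (hB : ∀ x, |φ x| ≤ B) {η : ℝ} (hη : 0 < η) :
    ∃ C : ℝ, 0 ≤ C ∧ ∀ a b, |φ a - φ b| ≤ η + C * |a - b| := by
  obtain ⟨r, hr, hφ⟩ := Metric.uniformContinuous_iff.1 huc η hη
  have hB0 : 0 ≤ B := (abs_nonneg _).trans (hB 0)
  refine ⟨2 * B / r, by positivity, fun a b => ?_⟩
  have hC : 0 ≤ 2 * B / r * |a - b| := by positivity
  rcases lt_or_ge |a - b| r with hab | hab
  · linarith [(hφ hab).le, Real.dist_eq (φ a) (φ b)]
  · have hfar : 2 * B ≤ 2 * B / r * |a - b| := by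
      rw [div_mul_eq_mul_div, le_div_iff₀ hr]
      gcongr
    linarith [abs_sub (φ a) (φ b), hB a, hB b]

namespace CircleDiffeo

variable (f : CircleDiffeo) {α : ℝ}

/-- The logarithm of the derivative. Its Birkhoff sum `birkhoffSum f f.logSlope k` is the logarithm
of the derivative of `f^[k]`. -/
noncomputable def logSlope (x : ℝ) : ℝ := Real.log (deriv f x)

lemma continuous_logSlope : Continuous f.logSlope :=
  (f.contDiff.continuous_deriv le_rfl).log fun x => (f.deriv_pos x).ne'

lemma periodic_logSlope : Function.Periodic f.logSlope 1 := fun x => by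
  rw [logSlope, logSlope, ← deriv_comp_add_const, funext f.commute_translation, deriv_add_const]

lemma exists_abs_logSlope_le : ∃ B : ℝ, ∀ x, |f.logSlope x| ≤ B := by
  obtain ⟨B, hB⟩ :=
    (f.periodic_logSlope.isBounded_of_continuous one_ne_zero f.continuous_logSlope).exists_norm_le
  exact ⟨B, fun x => hB _ (mem_range_self x)⟩

lemma exists_abs_logSlope_sub_le {η : ℝ} (hη : 0 < η) :
    ∃ C : ℝ, 0 ≤ C ∧ ∀ a b, |f.logSlope a - f.logSlope b| ≤ η + C * |a - b| := by
  obtain ⟨B, hB⟩ := f.exists_abs_logSlope_le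
  exact exists_abs_sub_le_add_mul
    (uniformContinuous_of_periodic one_pos f.periodic_logSlope f.continuous_logSlope) hB hη

lemma birkhoffSum_add_int (k : ℕ) (w : ℝ) (M : ℤ) :
    birkhoffSum f f.logSlope k (w + M) = birkhoffSum f f.logSlope k w := by
  have hper (x : ℝ) : f.logSlope (x + M) = f.logSlope x := by
    simpa only [mul_one] using f.periodic_logSlope.int_mul M x
  simp only [birkhoffSum, iterate_add_int, hper]

lemma birkhoffSum_iterate_sub_comm (k l : ℕ) (w : ℝ) :
    birkhoffSum f f.logSlope l (f^[k] w) - birkhoffSum f f.logSlope l w =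
      birkhoffSum f f.logSlope k (f^[l] w) - birkhoffSum f f.logSlope k w := by
  have h := birkhoffSum_add f f.logSlope k l w
  rw [add_comm k l, birkhoffSum_add] at h
  linarith

lemma hasDerivAt_iterate (k : ℕ) (w : ℝ) :
    HasDerivAt f^[k] (Real.exp (birkhoffSum f f.logSlope k w)) w := by
  induction k with
  | zero => simpa using hasDerivAt_id w
  | succ k ih =>
    rw [Function.iterate_succ', birkhoffSum_succ, add_comm, Real.exp_add, logSlope,
      Real.exp_log (f.deriv_pos _)]
    exact (f.differentiable _).hasDerivAt.comp w ih

lemma exists_iterate_sub_eq_exp_mul (k : ℕ) {a b : ℝ} (hab : a < b) : ∃ z ∈ Ioo a b,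
    f^[k] b - f^[k] a = Real.exp (birkhoffSum f f.logSlope k z) * (b - a) := by
  obtain ⟨z, hz, h⟩ := exists_hasDerivAt_eq_slope f^[k] _ hab
    (f.continuous.iterate k).continuousOn fun w _ => f.hasDerivAt_iterate k w
  exact ⟨z, hz, by rw [h, div_mul_cancel₀ _ (sub_pos.2 hab).ne']⟩

lemma exists_birkhoffSum_eq_zero (k : ℕ) : ∃ z, birkhoffSum f f.logSlope k z = 0 := by
  obtain ⟨z, -, h⟩ := f.exists_iterate_sub_eq_exp_mul k zero_lt_one
  have hone := f.iterate_add_int k 0 1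
  rw [Int.cast_one, zero_add] at hone
  rw [hone, add_sub_cancel_left, sub_zero, mul_one, eq_comm, Real.exp_eq_one_iff] at h
  exact ⟨z, h⟩

lemma birkhoffSum_refl (k : ℕ) (w : ℝ) :
    birkhoffSum f.refl f.refl.logSlope k (-w) = birkhoffSum f f.logSlope k w := by
  have h (x : ℝ) : f.refl.logSlope (-x) = f.logSlope x := by
    rw [logSlope, logSlope, refl, deriv.fun_neg, deriv_comp_neg, neg_neg, neg_neg]
  simp only [birkhoffSum, refl_iterate, neg_neg, h]

end CircleDiffeo

lemma abs_birkhoffSum_sub_le {g φ : ℝ → ℝ} (hg : Monotone g) {η C : ℝ} (hC₀ : 0 ≤ C)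
    (hC : ∀ a b, |φ a - φ b| ≤ η + C * |a - b|) {a b c d : ℝ} (ha : a ∈ Icc c d)
    (hb : b ∈ Icc c d) (k : ℕ) :
    |birkhoffSum g φ k a - birkhoffSum g φ k b| ≤
      k * η + C * ∑ i ∈ Finset.range k, (g^[i] d - g^[i] c) := by
  have hterm (i : ℕ) : |φ (g^[i] a) - φ (g^[i] b)| ≤ η + C * (g^[i] d - g^[i] c) :=
    (hC _ _).trans <| add_le_add_right (mul_le_mul_of_nonneg_left
      (abs_sub_le_of_le_of_le (hg.iterate i ha.1) (hg.iterate i ha.2) (hg.iterate i hb.1)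
        (hg.iterate i hb.2)) hC₀) η
  calc |birkhoffSum g φ k a - birkhoffSum g φ k b|
      ≤ ∑ i ∈ Finset.range k, |φ (g^[i] a) - φ (g^[i] b)| := by
        rw [birkhoffSum, birkhoffSum, ← Finset.sum_sub_distrib]
        exact Finset.abs_sum_le_sum_abs _ _
    _ ≤ ∑ i ∈ Finset.range k, (η + C * (g^[i] d - g^[i] c)) :=
        Finset.sum_le_sum fun i _ => hterm i
    _ = k * η + C * ∑ i ∈ Finset.range k, (g^[i] d - g^[i] c) := by
        rw [Finset.sum_add_distrib, ← Finset.mul_sum, Finset.sum_const, Finset.card_range,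
          nsmul_eq_mul]

namespace FareyPair

variable {α : ℝ} (F : FareyPair α) {f : CircleDiffeo}

section Distortion

variable {η C : ℝ}

lemma abs_birkhoffSum_sub_le_of_mem_up (hα : Irrational α) (hf : hasRotationNumber f α)
    (hC₀ : 0 ≤ C) (hC : ∀ a b, |f.logSlope a - f.logSlope b| ≤ η + C * |a - b|) {k : ℕ}
    (hk : k ≤ 2 * F.v) {a b w : ℝ} (ha : a ∈ Icc w (F.up f w)) (hb : b ∈ Icc w (F.up f w)) :
    |birkhoffSum f f.logSlope k a - birkhoffSum f f.logSlope k b| ≤ k * η + 2 * C := by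
  have hsum := F.sum_up_sub_le_two hα hf hk w
  simp only [← iterate_up] at hsum
  have := abs_birkhoffSum_sub_le f.strictMono.monotone hC₀ hC ha hb k
  nlinarith

lemma abs_birkhoffSum_sub_le_of_mem_down (hα : Irrational α) (hf : hasRotationNumber f α)
    (hC₀ : 0 ≤ C) (hC : ∀ a b, |f.logSlope a - f.logSlope b| ≤ η + C * |a - b|) {k : ℕ}
    (hk : k ≤ 2 * F.u) {a b w : ℝ} (ha : a ∈ Icc (F.down f w) w)
    (hb : b ∈ Icc (F.down f w) w) :
    |birkhoffSum f f.logSlope k a - birkhoffSum f f.logSlope k b| ≤ k * η + 2 * C := by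
  have hrefl (x : ℝ) : f.refl.logSlope x = f.logSlope (-x) := by
    simpa only [birkhoffSum_one, neg_neg] using f.birkhoffSum_refl 1 (-x)
  have hC' (a b : ℝ) : |f.refl.logSlope a - f.refl.logSlope b| ≤ η + C * |a - b| := by
    rw [hrefl, hrefl, abs_sub_comm a b, ← neg_sub_neg a b]
    exact hC _ _
  have hmem {x : ℝ} (hx : x ∈ Icc (F.down f w) w) : -x ∈ Icc (-w) (F.neg.up f.refl (-w)) := by
    rw [up_neg, neg_neg]
    exact ⟨neg_le_neg hx.2, neg_le_neg hx.1⟩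
  simpa only [CircleDiffeo.birkhoffSum_refl] using F.neg.abs_birkhoffSum_sub_le_of_mem_up hα.neg
    (CircleDiffeo.hasRotationNumber_refl hf) hC₀ hC' hk (hmem ha) (hmem hb)

lemma exists_mem_up_or_mem_down (hf : hasRotationNumber f α) (w z : ℝ) :
    ∃ k : ℕ, ∃ M : ℤ, k < F.v ∧ z + M ∈ Icc (f^[k] w) (F.up f (f^[k] w)) ∨
      k < F.u ∧ z + M ∈ Icc (F.down f (f^[k] w)) (f^[k] w) := by
  obtain ⟨k, hk, hmax⟩ := Finset.exists_max_image (Finset.range (F.u + F.v))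
    (fun k => f^[k] w + ⌊z - f^[k] w⌋) ⟨0, by simp [F.u_pos]⟩
  rw [Finset.mem_range] at hk
  have hfloor := Int.floor_le (z - f^[k] w)
  generalize ⌊z - f^[k] w⌋ = M at hmax hfloor
  have hlast {l : ℕ} (hl : l < F.u + F.v) {N : ℤ} (hN : f^[k] w + M < f^[l] w + N) :
      z < f^[l] w + N := by
    by_contra! hle
    have hfloor_le : (N : ℝ) ≤ ⌊z - f^[l] w⌋ := by exact_mod_cast Int.le_floor.2 (by linarith)
    linarith [hmax l (Finset.mem_range.2 hl)]
  rcases lt_or_ge k F.v with hkv | hvk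
  · refine ⟨k, -M, Or.inl ⟨hkv, by push_cast; linarith, ?_⟩⟩
    have hz := hlast (l := F.u + k) (by omega) (N := M - F.p) (by
      have := F.lt_up hf (f^[k] w)
      rw [up, ← Function.iterate_add_apply] at this
      push_cast
      linarith)
    rw [up, ← Function.iterate_add_apply]
    push_cast at hz ⊢
    linarith
  · obtain ⟨l, rfl⟩ := Nat.exists_eq_add_of_le hvk
    have hdown : f^[F.v + l] w - F.q < f^[l] w := by
      rw [Function.iterate_add_apply]
      exact F.down_lt hf _
    have hz := hlast (l := l) (by omega) (N := M + F.q) (by push_cast; linarith)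
    push_cast at hz
    refine ⟨l, -M - F.q, Or.inr ⟨by omega, ?_, by push_cast; linarith⟩⟩
    rw [down, ← Function.iterate_add_apply]
    push_cast
    linarith

lemma abs_birkhoffSum_u_le (hα : Irrational α) (hf : hasRotationNumber f α) (hη : 0 ≤ η)
    (hC₀ : 0 ≤ C) (hC : ∀ a b, |f.logSlope a - f.logSlope b| ≤ η + C * |a - b|)
    (huv : F.u ≤ 2 * F.v) (hvu : F.v ≤ 2 * F.u) (w : ℝ) :
    |birkhoffSum f f.logSlope F.u w| ≤ 3 * F.u * η + 4 * C := by
  obtain ⟨z, hz⟩ := f.exists_birkhoffSum_eq_zero F.u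
  obtain ⟨k, M, hk⟩ := F.exists_mem_up_or_mem_down hf w z
  rw [← f.birkhoffSum_add_int _ z M] at hz
  have hnear : |birkhoffSum f f.logSlope F.u (f^[k] w)| ≤ F.u * η + 2 * C := by
    rw [← sub_zero (birkhoffSum _ _ _ _), ← hz]
    rcases hk with ⟨-, hmem⟩ | ⟨-, hmem⟩
    · exact F.abs_birkhoffSum_sub_le_of_mem_up hα hf hC₀ hC huv
        (left_mem_Icc.2 (F.lt_up hf _).le) hmem
    · exact F.abs_birkhoffSum_sub_le_of_mem_down hα hf hC₀ hC (by omega)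
        (right_mem_Icc.2 (F.down_lt hf _).le) hmem
  have hshift : |birkhoffSum f f.logSlope F.u (f^[k] w) - birkhoffSum f f.logSlope F.u w| ≤
      k * η + 2 * C := by
    rw [f.birkhoffSum_iterate_sub_comm, ← f.birkhoffSum_add_int k (f^[F.u] w) (-F.p),
      Int.cast_neg, ← sub_eq_add_neg]
    exact F.abs_birkhoffSum_sub_le_of_mem_up hα hf hC₀ hC (by omega)
      (right_mem_Icc.2 (F.lt_up hf w).le) (left_mem_Icc.2 (F.lt_up hf w).le)
  have hku : k * η ≤ 2 * F.u * η := by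
    gcongr
    exact_mod_cast (by omega : k ≤ 2 * F.u)
  rw [abs_le] at *
  constructor <;> linarith [hnear.1, hnear.2, hshift.1, hshift.2]

end Distortion

end FareyPair

lemma abs_birkhoffSum_le_of_period {g φ : ℝ → ℝ} {B η : ℝ} {u : ℕ} (hη : 0 ≤ η)
    (hB : ∀ x, |φ x| ≤ B) (hu₀ : 0 < u) (hu : ∀ w, |birkhoffSum g φ u w| ≤ η * u) (k : ℕ)
    (w : ℝ) : |birkhoffSum g φ k w| ≤ η * k + B * u := by
  have hB₀ : 0 ≤ B := (abs_nonneg _).trans (hB 0)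
  induction k using Nat.strong_induction_on generalizing w with
  | _ k ih =>
    rcases lt_or_ge k u with hk | hk
    · calc |birkhoffSum g φ k w| ≤ ∑ i ∈ Finset.range k, |φ (g^[i] w)| :=
            Finset.abs_sum_le_sum_abs _ _
        _ ≤ ∑ _i ∈ Finset.range k, B := Finset.sum_le_sum fun i _ => hB _
        _ = B * k := by rw [Finset.sum_const, Finset.card_range, nsmul_eq_mul, mul_comm]
        _ ≤ B * u := by gcongr
        _ ≤ η * k + B * u := le_add_of_nonneg_left (by positivity)
    · obtain ⟨l, rfl⟩ := Nat.exists_eq_add_of_le hk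
      rw [birkhoffSum_add]
      push_cast
      linarith [abs_add_le (birkhoffSum g φ u w) (birkhoffSum g φ l (g^[u] w)), hu w,
        ih l (by omega) (g^[u] w)]

namespace CircleDiffeo

variable {f : CircleDiffeo} {α : ℝ}

lemma exists_abs_birkhoffSum_le (hα : Irrational α) (hf : hasRotationNumber f α) {η : ℝ}
    (hη : 0 < η) : ∃ C : ℝ, 0 ≤ C ∧ ∀ k w, |birkhoffSum f f.logSlope k w| ≤ η * k + C := by
  obtain ⟨C, hC₀, hC⟩ := f.exists_abs_logSlope_sub_le (η := η / 6) (by positivity)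
  obtain ⟨B, hB⟩ := f.exists_abs_logSlope_le
  obtain ⟨N, hN⟩ := exists_nat_ge (8 * C / η)
  obtain ⟨F, hu, -, huv, hvu⟩ := exists_comparable_fareyPair hα N
  have hCu : 8 * C ≤ F.u * η := by
    rw [← div_le_iff₀ hη]
    exact hN.trans (by exact_mod_cast hu)
  have hB₀ : 0 ≤ B := (abs_nonneg _).trans (hB 0)
  refine ⟨B * F.u, by positivity, abs_birkhoffSum_le_of_period hη.le hB F.u_pos fun w => ?_⟩
  linarith [F.abs_birkhoffSum_u_le hα hf (by positivity) hC₀ hC huv hvu w]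

end CircleDiffeo

/-- The ratio in which `x` splits the interval `[a, b]`. -/
noncomputable def splitRatio (a x b : ℝ) : ℝ := (x - a) / (b - x)

lemma splitRatio_neg (a x b : ℝ) : splitRatio (-b) (-x) (-a) = (splitRatio a x b)⁻¹ := by
  rw [splitRatio, splitRatio, inv_div, neg_sub_neg, neg_sub_neg]

lemma splitRatio_pos {a x b : ℝ} (ha : a < x) (hb : x < b) : 0 < splitRatio a x b :=
  div_pos (sub_pos.2 ha) (sub_pos.2 hb)

lemma abs_log_splitRatio_le {a x b E : ℝ} (ha : a < x) (hb : x < b)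
    (h : x - a ≤ Real.exp E * (b - x)) (h' : b - x ≤ Real.exp E * (x - a)) :
    |Real.log (splitRatio a x b)| ≤ E := by
  have hxa := sub_pos.2 ha
  have hbx := sub_pos.2 hb
  refine abs_le.2 ⟨?_, ?_⟩
  · rwa [neg_le, ← Real.log_inv, ← splitRatio_neg, Real.log_le_iff_le_exp
      (splitRatio_pos (neg_lt_neg hb) (neg_lt_neg ha)), splitRatio, neg_sub_neg, neg_sub_neg,
      div_le_iff₀ hxa]
  · rwa [Real.log_le_iff_le_exp (splitRatio_pos ha hb), splitRatio, div_le_iff₀ hbx]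

lemma two_mul_exp_pow_three_le (E : ℝ) : 2 * Real.exp E ^ 3 ≤ Real.exp (3 * E + 1) := by
  have htwo : 2 ≤ Real.exp 1 := by linarith [Real.add_one_le_exp (1 : ℝ)]
  rw [Real.exp_add, ← Real.exp_nat_mul, mul_comm]
  push_cast
  gcongr

/-- The map `U` changes lengths by a factor between `exp (-E)` and `exp E`. -/
def HasDistortion (U : ℝ → ℝ) (E : ℝ) : Prop := ∀ ⦃a b⦄, a < b →
  U b - U a ≤ Real.exp E * (b - a) ∧ b - a ≤ Real.exp E * (U b - U a)

namespace HasDistortion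

variable {U : ℝ → ℝ} {E : ℝ}

lemma strictMono (hU : HasDistortion U E) : StrictMono U := fun _ _ h => by
  have := (sub_pos.2 h).trans_le (hU h).2
  exact sub_pos.1 ((mul_pos_iff_of_pos_left (Real.exp_pos E)).1 this)

lemma abs_log_splitRatio_map_le (hU : HasDistortion U E) (hE : 0 ≤ E) {a b : ℝ}
    (hab : U a < b) (hba : b < U (U a)) (ha : a < U a) :
    |Real.log (splitRatio a b (U b))| ≤ 3 * E + 1 := by
  have hbU : b < U b := hba.trans (hU.strictMono hab)
  have hL := Real.one_le_exp hE
  have h₁ := (hU (ha.trans hab)).1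
  have h₂ := (hU (ha.trans hab)).2
  have h₃ := (hU (hU.strictMono (ha.trans hab))).2
  have h₄ := (hU hbU).1
  have htwo := two_mul_exp_pow_three_le E
  generalize Real.exp E = L at *
  have hab₀ : 0 < b - a := by linarith
  have hbU₀ : 0 < U b - b := by linarith
  refine abs_log_splitRatio_le (ha.trans hab) hbU ?_ ?_
  · calc b - a ≤ L * (L * (U (U b) - U (U a))) := h₂.trans (by gcongr)
      _ ≤ L * (L * (L * (U b - b) + (U b - b))) := by gcongr; linarith
      _ ≤ 2 * L ^ 3 * (U b - b) := by
        linarith [mul_le_mul_of_nonneg_right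
          (pow_le_pow_right₀ hL (Nat.le_succ 2)) hbU₀.le]
      _ ≤ Real.exp (3 * E + 1) * (U b - b) := by gcongr
  · calc U b - b ≤ L * (b - a) := by linarith
      _ ≤ 2 * L ^ 3 * (b - a) := by
        gcongr
        nlinarith [one_le_pow₀ hL (n := 2)]
      _ ≤ Real.exp (3 * E + 1) * (b - a) := by gcongr

lemma abs_log_splitRatio_le (hU : HasDistortion U E) (hE : 0 ≤ E) {a b : ℝ} (ha : a < U a)
    (hab : U (U a) < b) (hba : b < U (U (U a))) :
    |Real.log (splitRatio a (U a) b)| ≤ 3 * E + 1 := by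
  have hUa := hU.strictMono ha
  have hL := Real.one_le_exp hE
  have h₁ := hU ha
  have h₂ := (hU hUa).1
  have htwo := two_mul_exp_pow_three_le E
  generalize Real.exp E = L at *
  have : 0 < U a - a := sub_pos.2 ha
  have : 0 < b - U a := by linarith
  have hL₃ : L + L * L ≤ 2 * L ^ 3 := by nlinarith [one_le_pow₀ hL (n := 2)]
  refine _root_.abs_log_splitRatio_le ha (hUa.trans hab) ?_ ?_
  · calc U a - a ≤ L * (U (U a) - U a) := h₁.2
      _ ≤ L * (b - U a) := by gcongr
      _ ≤ 2 * L ^ 3 * (b - U a) := by gcongr; nlinarith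
      _ ≤ Real.exp (3 * E + 1) * (b - U a) := by gcongr
  · calc b - U a ≤ L * (U a - a) + L * (L * (U a - a)) := by
          linarith [mul_le_mul_of_nonneg_left h₁.1 (zero_le_one.trans hL), h₁.1]
      _ = (L + L * L) * (U a - a) := by ring
      _ ≤ 2 * L ^ 3 * (U a - a) := by gcongr
      _ ≤ Real.exp (3 * E + 1) * (U a - a) := by gcongr

end HasDistortion

namespace FareyPair

variable {α : ℝ} (F : FareyPair α) {f : CircleDiffeo}

lemma hasDistortion_up {E : ℝ} (hE : ∀ w, |birkhoffSum f f.logSlope F.u w| ≤ E) :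
    HasDistortion (F.up f) E := fun a b hab => by
  obtain ⟨z, -, hz⟩ := f.exists_iterate_sub_eq_exp_mul F.u hab
  have hEz := abs_le.1 (hE z)
  have hba := (sub_pos.2 hab).le
  simp only [up, sub_sub_sub_cancel_right, hz]
  refine ⟨by gcongr; exact hEz.2, ?_⟩
  rw [← mul_assoc, ← Real.exp_add]
  exact le_mul_of_one_le_left hba (Real.one_le_exp (by linarith))

lemma up_down (w : ℝ) : F.up f (F.down f w) = F.down f (F.up f w) := by
  simp only [up, down, CircleDiffeo.iterate_sub_int, ← Function.iterate_add_apply]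
  rw [add_comm, sub_right_comm]

lemma down_up_lt (hf : hasRotationNumber f α) (h : F.upGap < F.downGap) (w : ℝ) :
    F.down f (F.up f w) < w := by
  have := CircleDiffeo.iterate_lt_of_natCast_mul_lt hf w (d := F.v + F.u) (M := F.p + F.q) (by
    simp only [upGap, downGap] at h
    push_cast
    linarith)
  simp only [up, down, CircleDiffeo.iterate_sub_int, ← Function.iterate_add_apply]
  push_cast at this
  linarith

lemma lt_down_up_up (hf : hasRotationNumber f α) (h : F.downGap < 2 * F.upGap) (w : ℝ) :
    w < F.down f (F.up f (F.up f w)) := by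
  have := CircleDiffeo.lt_iterate_of_lt_natCast_mul hf w (d := F.v + (F.u + F.u))
    (M := 2 * F.p + F.q) (by
      simp only [upGap, downGap] at h
      push_cast
      linarith)
  simp only [up, down, CircleDiffeo.iterate_sub_int, ← Function.iterate_add_apply]
  push_cast at this
  linarith

/-- The neighbours of every point `w` under the first return maps split at `w` with a ratio that is
bounded by `exp E`, and the same is true of the neighbours `a`, `b` under the inverses of the
return maps. -/
structure ReturnRatioBound (f : CircleDiffeo) (E : ℝ) : Prop where
  initial : ∀ w, |Real.log (splitRatio (F.down f w) w (F.up f w))| ≤ E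
  final : ∀ a b c, F.up f a = c → F.down f b = c → |Real.log (splitRatio a c b)| ≤ E

namespace ReturnRatioBound

variable {F}

lemma of_refl {E : ℝ} (h : F.neg.ReturnRatioBound f.refl E) : F.ReturnRatioBound f E where
  initial w := by
    simpa only [up_neg, down_neg, neg_neg, splitRatio_neg, Real.log_inv, abs_neg] using
      h.initial (-w)
  final a b c ha hb := by
    simpa only [splitRatio_neg, Real.log_inv, abs_neg] using
      h.final (-b) (-a) (-c) (by rw [up_neg, neg_neg, hb]) (by rw [down_neg, neg_neg, ha])

lemma mono {E E' : ℝ} (h : F.ReturnRatioBound f E) (hE : E ≤ E') : F.ReturnRatioBound f E' :=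
  ⟨fun w => (h.initial w).trans hE, fun a b c ha hb => (h.final a b c ha hb).trans hE⟩

end ReturnRatioBound

lemma UpBalanced.returnRatioBound {F : FareyPair α} (hF : F.UpBalanced)
    (hf : hasRotationNumber f α) {E : ℝ} (hE : ∀ w, |birkhoffSum f f.logSlope F.u w| ≤ E) :
    F.ReturnRatioBound f (3 * E + 1) where
  initial w := by
    refine (F.hasDistortion_up hE).abs_log_splitRatio_map_le ((abs_nonneg _).trans (hE 0)) ?_ ?_
      (F.lt_up hf _)
    · rw [F.up_down]
      exact F.down_up_lt hf hF.upGap_lt w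
    · rw [F.up_down, F.up_down]
      exact F.lt_down_up_up hf hF.downGap_lt w
  final a b c ha hb := by
    subst ha
    refine (F.hasDistortion_up hE).abs_log_splitRatio_le ((abs_nonneg _).trans (hE 0))
      (F.lt_up hf a) ?_ ?_
    · rw [← (F.strictMono_down f).lt_iff_lt, hb]
      exact F.down_up_lt hf hF.upGap_lt _
    · rw [← (F.strictMono_down f).lt_iff_lt, hb]
      exact F.lt_down_up_up hf hF.downGap_lt _

lemma exists_forall_upBalanced_returnRatioBound (hα : Irrational α) (hf : hasRotationNumber f α)
    {κ : ℝ} (hκ : 0 < κ) : ∃ m₀ : ℕ, ∀ (F : FareyPair α) (m : ℕ), F.UpBalanced → F.u ≤ 80 * m →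
      m₀ ≤ m → F.ReturnRatioBound f (m * κ) := by
  obtain ⟨C, -, hC⟩ := CircleDiffeo.exists_abs_birkhoffSum_le hα hf (η := κ / 480) (by positivity)
  obtain ⟨m₀, hm₀⟩ := exists_nat_ge ((6 * C + 2) / κ)
  refine ⟨m₀, fun F m hF hu hm => (hF.returnRatioBound hf (hC F.u)).mono ?_⟩
  have hCm : 6 * C + 2 ≤ m * κ := by
    rw [← div_le_iff₀ hκ]
    exact hm₀.trans (by exact_mod_cast hm)
  have huκ : (F.u : ℝ) * κ ≤ 80 * m * κ := by
    gcongr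
    exact_mod_cast hu
  linarith

lemma exists_forall_returnRatioBound (hα : Irrational α) (hf : hasRotationNumber f α) {κ : ℝ}
    (hκ : 0 < κ) : ∃ m₀ : ℕ, ∀ (F : FareyPair α) (n m : ℕ), F.IsCharacteristic n m → m₀ ≤ m →
      F.ReturnRatioBound f (m * κ) := by
  obtain ⟨m₁, hm₁⟩ := exists_forall_upBalanced_returnRatioBound hα hf hκ
  obtain ⟨m₂, hm₂⟩ := exists_forall_upBalanced_returnRatioBound hα.neg
    (CircleDiffeo.hasRotationNumber_refl hf) hκ
  refine ⟨max m₁ m₂, fun F n m hF hm => ?_⟩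
  have hmin := hF.min_le
  rcases hF.balanced with h | h
  · have := h.u_le
    exact hm₁ F m h (by omega) (le_of_max_le_left hm)
  · have : F.v ≤ 2 * F.u := h.u_le
    exact .of_refl (hm₂ F.neg m h (by simp only [neg]; omega) (le_of_max_le_right hm))

end FareyPair

lemma fract_eq_add_intCast {a : ℝ} (M : ℤ) (h₀ : 0 ≤ a + M) (h₁ : a + M < 1) :
    Int.fract a = a + M :=
  Int.fract_eq_iff.2 ⟨h₀, h₁, -M, by push_cast; ring⟩

lemma inArc_iff {a w b : ℝ} :
    inArc a w b ↔ ∃ M N : ℤ, a < w + M ∧ w + M < b + N ∧ b + N < a + 1 := by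
  refine ⟨fun ⟨h₁, h₂⟩ => ?_, fun ⟨M, N, h₁, h₂, h₃⟩ => ?_⟩
  · have hw := Int.fract_add_floor (w - a)
    have hb := Int.fract_add_floor (b - a)
    have hlt := Int.fract_lt_one (b - a)
    refine ⟨-⌊w - a⌋, -⌊b - a⌋, ?_, ?_, ?_⟩ <;> push_cast <;> linarith
  · rw [inArc, fract_eq_add_intCast (a := w - a) M (by linarith) (by linarith),
      fract_eq_add_intCast (a := b - a) N (by linarith) (by linarith)]
    constructor <;> linarith

lemma inArc_iff_exists {a w b : ℝ} (K L : ℤ) (hab : a + K < b + L) (hba : b + L < a + K + 1) :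
    inArc a w b ↔ ∃ M : ℤ, a + K < w + M ∧ w + M < b + L := by
  have hb := fract_eq_add_intCast (a := b - a) (L - K) (by push_cast; linarith)
    (by push_cast; linarith)
  push_cast at hb
  refine ⟨fun ⟨h₁, h₂⟩ => ⟨K - ⌊w - a⌋, ?_⟩, fun ⟨M, h₁, h₂⟩ => ?_⟩
  · have hw := Int.fract_add_floor (w - a)
    push_cast
    constructor <;> linarith
  · rw [inArc, hb, fract_eq_add_intCast (a := w - a) (M - K) (by push_cast; linarith)
      (by push_cast; linarith)]
    push_cast
    constructor <;> linarith

lemma IsRotationOrdered.inArc_iff {α : ℝ} (hα : Irrational α) {q : ℕ → ℝ} {n : ℕ}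
    (hq : IsRotationOrdered α q n) {j k l : ℕ} (hj : j ≤ n) (hk : k ≤ n) (hl : l ≤ n) :
    inArc (q j) (q k) (q l) ↔ inArc (j * α) (k * α) (l * α) := by
  have h₁ (M : ℤ) := hq.lt_iff hα hj hk (M := 0) (N := M)
  have h₂ (M N : ℤ) := hq.lt_iff hα hk hl (M := M) (N := N)
  have h₃ (N : ℤ) := hq.lt_iff hα hl hj (M := N) (N := 1)
  simp only [Int.cast_zero, add_zero, Int.cast_one] at h₁ h₃
  simp only [_root_.inArc_iff, h₁, h₂, h₃]

namespace FareyPair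

variable {α : ℝ} (F : FareyPair α)

lemma inArc_zero_iff (hu : 2 ≤ F.u) {l : ℕ} (hl : l < F.u + F.v) :
    inArc (F.v * α) (l * α) (F.u * α) ↔ l = 0 := by
  have hlt := F.upGap_add_downGap_lt_one hu
  have hup := F.upGap_pos
  have hdown := F.downGap_pos
  have hempty (hl₀ : 0 < l) := F.upGap_le_or_le_neg_downGap (l := l) (by omega) (by omega)
  simp only [upGap, downGap, Int.cast_natCast] at *
  rw [inArc_iff_exists (-F.q) (-F.p) (by push_cast; linarith) (by push_cast; linarith)]
  refine ⟨fun ⟨M, h₁, h₂⟩ => ?_, fun h => ⟨0, ?_⟩⟩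
  · by_contra hl₀
    push_cast at h₁ h₂
    rcases hempty (Nat.pos_of_ne_zero hl₀) M with h | h <;> linarith
  · subst h
    push_cast
    constructor <;> linarith

lemma inArc_last_iff (hu : 2 ≤ F.u) {n l : ℕ} (hun : F.u ≤ n) (hvn : F.v ≤ n)
    (hn : n < F.u + F.v) (hl : l ≤ n) :
    inArc ((n - F.u : ℕ) * α) (l * α) ((n - F.v : ℕ) * α) ↔ l = n := by
  have hlt := F.upGap_add_downGap_lt_one hu
  have hup := F.upGap_pos
  have hdown := F.downGap_pos
  have hempty (hl₀ : l < n) := F.upGap_le_or_le_neg_downGap (l := n - l) (by omega) (by omega)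
  simp only [upGap, downGap] at *
  push_cast [Nat.cast_sub hun, Nat.cast_sub hvn] at *
  rw [inArc_iff_exists F.p F.q (by linarith) (by linarith)]
  refine ⟨fun ⟨M, h₁, h₂⟩ => ?_, fun h => ⟨0, ?_⟩⟩
  · by_contra hl₀
    rcases hempty (lt_of_le_of_ne hl hl₀) (-M) with h | h <;> push_cast at h <;> linarith
  · subst h
    push_cast
    constructor <;> linarith

variable {F} {n : ℕ} {f : ℝ → ℝ} {x : ℝ}

lemma isAdaptedSeg (hα : Irrational α) (hun : F.u < n) (hvn : F.v < n)
    (hn : n + 1 < F.u + F.v) (hf : IsRotationOrdered α (fun k => f^[k] x) n) :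
    IsAdaptedSeg f x n (n - F.u) (n - F.v) := by
  have hu : 2 ≤ F.u := by omega
  have hv := F.v_pos
  have hinit (k : ℕ) (hk : k ≤ n) : inArc (f^[F.v] x) (f^[k] x) (f^[F.u] x) ↔ k = 0 :=
    (hf.inArc_iff hα hvn.le hk hun.le).trans (F.inArc_zero_iff hu (by omega))
  have hfin (k : ℕ) (hk : k ≤ n) :
      inArc (f^[n - F.u] x) (f^[k] x) (f^[n - F.v] x) ↔ k = n :=
    (hf.inArc_iff hα (by omega) hk (by omega)).trans
      (F.inArc_last_iff hu hun.le hvn.le (by omega) hk)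
  have hnu : n - (n - F.u) = F.u := by omega
  have hnv : n - (n - F.v) = F.v := by omega
  refine ⟨by omega, by omega, by omega, by omega, ?_, fun k hk h => ?_, (hfin n le_rfl).2 rfl,
    fun k hk h => ?_, by omega⟩
  · rw [hnu, hnv]
    exact (hinit 0 n.zero_le).2 rfl
  · rw [hnu, hnv, hinit k hk] at h
    rw [h, Function.iterate_zero_apply, sub_self, Int.fract_zero]
  · rw [(hfin k hk).1 h, sub_self, Int.fract_zero]

lemma initialRatio_eq (hu : 2 ≤ F.u) (hun : F.u ≤ n) (hvn : F.v ≤ n)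
    (hf : IsRotationOrdered α (fun k => f^[k] x) n) :
    initialRatio f x n (n - F.u) (n - F.v) = splitRatio (f^[F.v] x - F.q) x (f^[F.u] x - F.p) := by
  have hlt := F.upGap_add_downGap_lt_one hu
  simp only [upGap, downGap] at hlt
  have hv := hf F.v hvn 0 n.zero_le 0 F.q (by push_cast; linarith [F.lt_q])
  have hu := hf 0 n.zero_le F.u hun F.p 0 (by push_cast; linarith [F.p_lt])
  have huv := hf F.u hun F.v hvn (F.q - F.p) 1 (by push_cast; linarith)
  push_cast [Function.iterate_zero_apply] at hv hu huv
  rw [initialRatio, Nat.sub_sub_self hun, Nat.sub_sub_self hvn,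
    fract_eq_add_intCast F.q (by linarith) (by linarith),
    fract_eq_add_intCast (-F.p) (by push_cast; linarith) (by push_cast; linarith), splitRatio]
  push_cast
  congr 1 <;> ring

lemma finalRatio_eq (hu : 2 ≤ F.u) (hun : F.u ≤ n) (hvn : F.v ≤ n)
    (hf : IsRotationOrdered α (fun k => f^[k] x) n) :
    finalRatio f x n (n - F.u) (n - F.v) =
      splitRatio (f^[n - F.u] x + F.p) (f^[n] x) (f^[n - F.v] x + F.q) := by
  have hlt := F.upGap_add_downGap_lt_one hu
  simp only [upGap, downGap] at hlt
  have hnu := hf (n - F.u) (by omega) n le_rfl F.p 0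
    (by push_cast [Nat.cast_sub hun]; linarith [F.p_lt])
  have hnv := hf n le_rfl (n - F.v) (by omega) 0 F.q
    (by push_cast [Nat.cast_sub hvn]; linarith [F.lt_q])
  have huv := hf (n - F.v) (by omega) (n - F.u) (by omega) (F.q - F.p) 1
    (by push_cast [Nat.cast_sub hun, Nat.cast_sub hvn]; linarith)
  push_cast at hnu hnv huv
  rw [finalRatio, fract_eq_add_intCast (-F.p) (by push_cast; linarith) (by push_cast; linarith),
    fract_eq_add_intCast F.q (by linarith) (by linarith), splitRatio]
  push_cast
  congr 1 <;> ring

end FareyPair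

/-- The lift `⌊t⌋ + {t} ^ N` of a circle homeomorphism fixing the integers; it tends to `⌊t⌋` as
`N` grows. -/
noncomputable def stairs (N : ℕ) (t : ℝ) : ℝ := ⌊t⌋ + Int.fract t ^ N

lemma continuous_stairs {N : ℕ} (hN : N ≠ 0) : Continuous (stairs N) := by
  have heq : stairs N = fun t => t + (Int.fract t ^ N - Int.fract t) := by
    funext t
    rw [stairs]
    linarith [Int.fract_add_floor t]
  rw [heq]
  exact continuous_id.add <| ContinuousOn.comp_fract'' (f := fun s : ℝ => s ^ N - s) (by fun_prop)
    (by simp only [zero_pow hN, one_pow, sub_self])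

lemma strictMono_stairs {N : ℕ} (hN : N ≠ 0) : StrictMono (stairs N) := by
  intro s t hst
  simp only [stairs]
  rcases (Int.floor_mono hst.le).eq_or_lt with h | h
  · have hfract : Int.fract s < Int.fract t := by
      rw [Int.fract, Int.fract, h]
      linarith
    rw [h]
    linarith [pow_lt_pow_left₀ hfract (Int.fract_nonneg s) hN]
  · have hfloor : (⌊s⌋ : ℝ) + 1 ≤ ⌊t⌋ := by exact_mod_cast h
    linarith [pow_lt_one₀ (Int.fract_nonneg s) (Int.fract_lt_one s) hN,
      pow_nonneg (Int.fract_nonneg t) N]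

lemma stairs_add_one (N : ℕ) (t : ℝ) : stairs N (t + 1) = stairs N t + 1 := by
  rw [stairs, stairs, Int.floor_add_one, Int.fract_add_one]
  push_cast
  ring

lemma stairs_zero {N : ℕ} (hN : N ≠ 0) : stairs N 0 = 0 := by
  simp only [stairs, Int.floor_zero, Int.cast_zero, Int.fract_zero, zero_pow hN, add_zero]

lemma eventually_stairs_le {s t : ℝ} (hlt : ∀ M : ℤ, M < s → M < t)
    (heq : ∀ M : ℤ, M = s → (M : ℝ) = t) : ∀ᶠ N in atTop, stairs N s ≤ t := by
  rcases (Int.floor_le s).eq_or_lt with h | h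
  · filter_upwards [eventually_ne_atTop 0] with N hN
    rw [stairs, Int.fract, h, sub_self, zero_pow hN, add_zero, ← h, heq _ h]
  · have hlim := tendsto_pow_atTop_nhds_zero_of_lt_one (Int.fract_nonneg s) (Int.fract_lt_one s)
    filter_upwards [hlim.eventually (gt_mem_nhds (sub_pos.2 (hlt _ h)))] with N hN
    rw [stairs]
    linarith

/-- A maximum of translates of `stairs N`, which for large `N` takes the value `q k` at `p k`,
`k ≤ n`, when the points `p k` and `q k` are similarly ordered. -/
noncomputable def stairsSup (p q : ℕ → ℝ) (n N : ℕ) (z : ℝ) : ℝ :=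
  (Finset.range (n + 1)).sup' Finset.nonempty_range_add_one fun k => q k + stairs N (z - p k)

section stairsSup

variable {p q : ℕ → ℝ} {n N : ℕ}

lemma stairsSup_add_one (z : ℝ) : stairsSup p q n N (z + 1) = stairsSup p q n N z + 1 := by
  simp only [stairsSup, Finset.sup'_add, add_sub_right_comm z 1, stairs_add_one, ← add_assoc]

lemma continuous_stairsSup (hN : N ≠ 0) : Continuous (stairsSup p q n N) :=
  Continuous.finset_sup'_apply _ fun _ _ =>
    continuous_const.add ((continuous_stairs hN).comp (continuous_id.sub continuous_const))

lemma strictMono_stairsSup (hN : N ≠ 0) : StrictMono (stairsSup p q n N) := by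
  intro s t hst
  refine (Finset.sup'_lt_iff _).2 fun k hk => ?_
  have hlt := strictMono_stairs hN (sub_lt_sub_right hst (p k))
  exact (add_lt_add_right hlt (q k)).trans_le
    (Finset.le_sup' (fun k => q k + stairs N (t - p k)) hk)

lemma stairsSup_apply (hN : N ≠ 0) {l : ℕ} (hl : l ≤ n)
    (h : ∀ k ≤ n, q k + stairs N (p l - p k) ≤ q l) : stairsSup p q n N (p l) = q l := by
  refine le_antisymm (Finset.sup'_le _ _ fun k hk => h k (Finset.mem_range_succ_iff.1 hk)) ?_
  have hle := Finset.le_sup' (fun k => q k + stairs N (p l - p k)) (Finset.mem_range_succ_iff.2 hl)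
  rwa [sub_self, stairs_zero hN, add_zero] at hle

end stairsSup

lemma similarlyOrdered_of_lt_of_eq {p q : ℕ → ℝ} {n : ℕ}
    (hlt : ∀ k ≤ n, ∀ l ≤ n, ∀ M : ℤ, p k + M < p l → q k + M < q l)
    (heq : ∀ k ≤ n, ∀ l ≤ n, ∀ M : ℤ, p k + M = p l → q k + M = q l) :
    SimilarlyOrdered p q n := by
  have hev : ∀ᶠ N in atTop, ∀ k ∈ Finset.range (n + 1), ∀ l ∈ Finset.range (n + 1),
      stairs N (p l - p k) ≤ q l - q k := by
    simp only [Filter.eventually_all_finset]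
    intro k hk l hl
    rw [Finset.mem_range_succ_iff] at hk hl
    refine eventually_stairs_le (fun M hM => ?_) fun M hM => ?_
    · linarith [hlt k hk l hl M (by linarith)]
    · linarith [heq k hk l hl M (by linarith)]
  obtain ⟨N, hN, hN₀⟩ := (hev.and (eventually_ne_atTop 0)).exists
  refine ⟨stairsSup p q n N, continuous_stairsSup hN₀, strictMono_stairsSup hN₀,
    stairsSup_add_one, fun l hl => ?_⟩
  rw [stairsSup_apply hN₀ hl fun k hk => ?_, sub_self, Int.fract_zero]
  linarith [hN k (Finset.mem_range_succ_iff.2 hk) l (Finset.mem_range_succ_iff.2 hl)]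

lemma IsRotationOrdered.similarlyOrdered {α : ℝ} (hα : Irrational α) {p q : ℕ → ℝ} {n : ℕ}
    (hp : IsRotationOrdered α p n) (hq : IsRotationOrdered α q n) : SimilarlyOrdered p q n := by
  have hiff {k l : ℕ} (hk : k ≤ n) (hl : l ≤ n) (M N : ℤ) :
      p k + M < p l + N ↔ q k + M < q l + N :=
    (hp.lt_iff hα hk hl).trans (hq.lt_iff hα hk hl).symm
  refine similarlyOrdered_of_lt_of_eq (fun k hk l hl M h => ?_) fun k hk l hl M h => ?_
  · simpa only [Int.cast_zero, add_zero] using (hiff hk hl M 0).1 (by simpa using h)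
  · have hle := (hiff hk hl M 0).not.1 (by simp [h])
    have hge := (hiff hl hk 0 M).not.1 (by simp [h])
    rw [Int.cast_zero, add_zero] at hle hge
    exact le_antisymm (not_lt.1 hge) (not_lt.1 hle)

lemma hasDerivAt_max_zero_sq (x : ℝ) :
    HasDerivAt (fun x : ℝ => max 0 x ^ 2) (2 * max 0 x) x := by
  have hne (y : ℝ) (hy : y ≠ 0) : HasDerivAt (fun x : ℝ => max 0 x ^ 2) (2 * max 0 y) y := by
    rcases hy.lt_or_gt with hneg | hpos
    · rw [max_eq_left hneg.le, mul_zero]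
      refine (hasDerivAt_const y (0 : ℝ)).congr_of_eventuallyEq ?_
      filter_upwards [gt_mem_nhds hneg] with z hz
      rw [max_eq_left hz.le, zero_pow two_ne_zero]
    · rw [max_eq_right hpos.le]
      refine ((hasDerivAt_pow 2 y).congr_deriv (by ring)).congr_of_eventuallyEq ?_
      filter_upwards [lt_mem_nhds hpos] with z hz
      rw [max_eq_right hz.le]
  rcases eq_or_ne x 0 with rfl | hx
  · exact hasDerivAt_of_hasDerivAt_of_ne hne (by fun_prop) (by fun_prop)
  · exact hne x hx

lemma contDiff_max_zero_sq : ContDiff ℝ 1 fun x : ℝ => max 0 x ^ 2 := by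
  refine contDiff_one_iff_deriv.2 ⟨fun x => (hasDerivAt_max_zero_sq x).differentiableAt, ?_⟩
  rw [funext fun x => (hasDerivAt_max_zero_sq x).deriv]
  fun_prop

/-- A `C¹` bump function on the circle, equal to `1` at the origin and supported in the arc of
radius `r` around it. -/
noncomputable def bump (r t : ℝ) : ℝ :=
  max 0 (1 - (Real.sin (Real.pi * t) / Real.sin (Real.pi * r)) ^ 2) ^ 2

section bump

variable (r t : ℝ)

lemma contDiff_bump : ContDiff ℝ 1 (bump r) :=
  contDiff_max_zero_sq.comp (by fun_prop)

lemma bump_add_one : bump r (t + 1) = bump r t := by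
  rw [bump, mul_add, mul_one, Real.sin_add_pi, neg_div, neg_sq, bump]

lemma bump_zero : bump r 0 = 1 := by
  simp [bump]

lemma bump_nonneg : 0 ≤ bump r t := by
  rw [bump]
  positivity

lemma bump_le_one : bump r t ≤ 1 :=
  pow_le_one₀ (le_max_left _ _) (max_le zero_le_one (sub_le_self _ (sq_nonneg _)))

lemma deriv_bump : deriv (bump r) t =
    -(4 * Real.pi) * max 0 (1 - (Real.sin (Real.pi * t) / Real.sin (Real.pi * r)) ^ 2) *
      (Real.sin (Real.pi * t) / Real.sin (Real.pi * r)) * Real.cos (Real.pi * t) /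
        Real.sin (Real.pi * r) := by
  have hsin : HasDerivAt (fun t => Real.sin (Real.pi * t) / Real.sin (Real.pi * r))
      (Real.cos (Real.pi * t) * Real.pi / Real.sin (Real.pi * r)) t :=
    (((hasDerivAt_id t).const_mul Real.pi).congr_deriv (mul_one _)).sin.div_const _
  have := (hasDerivAt_max_zero_sq _).comp t ((hsin.pow 2).const_sub 1)
  refine this.deriv.trans ?_
  simp only [Nat.cast_ofNat, Pi.pow_apply]
  ring

variable {r t}

lemma deriv_bump_eq_zero (h : bump r t = 0) : deriv (bump r) t = 0 := by
  rw [deriv_bump, eq_zero_of_pow_eq_zero h]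
  simp only [mul_zero, zero_mul, zero_div]

lemma two_mul_le_sin_pi_mul (hr : 0 ≤ r) (hr' : r ≤ 1 / 2) : 2 * r ≤ Real.sin (Real.pi * r) := by
  have h := Real.mul_le_sin (x := Real.pi * r) (by positivity) (by nlinarith [Real.pi_pos])
  rwa [← mul_assoc, div_mul_cancel₀ _ Real.pi_ne_zero] at h

lemma abs_deriv_bump_le (hr : 0 < r) (hr' : r ≤ 1 / 2) : |deriv (bump r) t| ≤ 7 / r := by
  have hsin := two_mul_le_sin_pi_mul hr.le hr'
  have hsin₀ : 0 < Real.sin (Real.pi * r) := by linarith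
  set x := Real.sin (Real.pi * t) / Real.sin (Real.pi * r) with hx
  have hprod : |max 0 (1 - x ^ 2) * x| ≤ 1 := by
    rw [abs_mul, abs_of_nonneg (le_max_left _ _)]
    rcases max_choice 0 (1 - x ^ 2) with h | h <;> rw [h]
    · simp
    · nlinarith [sq_abs x, abs_nonneg x, h ▸ le_max_left 0 (1 - x ^ 2)]
  calc |deriv (bump r) t|
      = 4 * Real.pi * |max 0 (1 - x ^ 2) * x| * |Real.cos (Real.pi * t)| /
          Real.sin (Real.pi * r) := by
        rw [deriv_bump, ← hx, mul_assoc (-(4 * Real.pi)), abs_div, abs_mul, abs_mul, abs_neg,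
          abs_of_pos hsin₀, abs_of_pos (by positivity : 0 < 4 * Real.pi)]
    _ ≤ 4 * Real.pi * 1 * 1 / (2 * r) := by
        gcongr
        exact Real.abs_cos_le_one _
    _ ≤ 7 / r := by
        rw [div_le_div_iff₀ (by positivity) hr]
        nlinarith [Real.pi_lt_d2]

lemma exists_abs_sub_lt_of_bump_ne_zero (hr : 0 < r) (hr' : r ≤ 1 / 2) (h : bump r t ≠ 0) :
    ∃ M : ℤ, |t - M| < r := by
  refine ⟨round t, ?_⟩
  contrapose! h
  have hround := abs_sub_round t
  have hpi := Real.pi_pos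
  have hsin : Real.sin (Real.pi * r) ≤ |Real.sin (Real.pi * t)| := by
    have heq : |Real.sin (Real.pi * t)| = |Real.sin (Real.pi * |t - round t|)| := by
      have hshift : |Real.sin (Real.pi * (t - round t))| = |Real.sin (Real.pi * t)| := by
        rw [mul_sub, mul_comm _ (round t : ℝ), Real.sin_sub_int_mul_pi, abs_mul, abs_zpow, abs_neg,
          abs_one, one_zpow, one_mul]
      rcases abs_choice (t - round t) with h | h <;> rw [h, ← hshift]
      rw [mul_neg, Real.sin_neg, abs_neg]
    rw [heq]
    exact (Real.sin_le_sin_of_le_of_le_pi_div_two (by nlinarith) (by nlinarith) (by gcongr)).trans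
      (le_abs_self _)
  have hsin₀ : 0 < Real.sin (Real.pi * r) := by linarith [two_mul_le_sin_pi_mul hr.le hr']
  have hone : 1 ≤ (Real.sin (Real.pi * t) / Real.sin (Real.pi * r)) ^ 2 := by
    rw [div_pow, ← sq_abs (Real.sin (Real.pi * t)), one_le_div (by positivity)]
    gcongr
  rw [bump, max_eq_left (by linarith), zero_pow two_ne_zero]

end bump

/-- The circle diffeomorphism obtained by adding to the identity a periodic function of derivative
greater than `-1`. -/
noncomputable def CircleDiffeo.idAdd (φ : ℝ → ℝ) (hφ : ContDiff ℝ 1 φ)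
    (hper : ∀ z, φ (z + 1) = φ z) (hderiv : ∀ z, -1 < deriv φ z) : CircleDiffeo where
  toFun z := z + φ z
  contDiff := contDiff_id.add hφ
  deriv_pos z := by
    rw [deriv_fun_add differentiableAt_fun_id (hφ.differentiable one_ne_zero z), deriv_id'']
    linarith [hderiv z]
  commute_translation z := by rw [hper, add_right_comm]

lemma abs_sum_le_of_ne_zero_unique {ι : Type*} {s : Finset ι} {x : ι → ℝ} {B : ℝ} (hB : 0 ≤ B)
    (hx : ∀ k ∈ s, |x k| ≤ B) (huniq : ∀ k ∈ s, ∀ l ∈ s, x k ≠ 0 → x l ≠ 0 → k = l) :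
    |∑ k ∈ s, x k| ≤ B := by
  by_cases h : ∃ k ∈ s, x k ≠ 0
  · obtain ⟨k, hk, hxk⟩ := h
    rw [Finset.sum_eq_single_of_mem k hk fun l hl hlk => ?_]
    · exact hx k hk
    · by_contra hxl
      exact hlk (huniq l hl k hk hxl hxk)
  · push Not at h
    rwa [Finset.sum_eq_zero h, abs_zero]

/-- The sum of the bumps of height `c k` around the points `a k` with radii `r k`, `k ∈ s`. -/
noncomputable def bumpSum {ι : Type*} (s : Finset ι) (a r c : ι → ℝ) (z : ℝ) : ℝ :=
  ∑ k ∈ s, c k * bump (r k) (z - a k)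

section bumpSum

variable {ι : Type*} {s : Finset ι} {a r c : ι → ℝ} {δ : ℝ}

lemma contDiff_bumpSum : ContDiff ℝ 1 (bumpSum s a r c) :=
  ContDiff.sum fun k _ =>
    contDiff_const.mul ((contDiff_bump (r k)).comp (contDiff_id.sub contDiff_const))

lemma bumpSum_add_one (z : ℝ) : bumpSum s a r c (z + 1) = bumpSum s a r c z := by
  simp only [bumpSum, add_sub_right_comm z 1, bump_add_one]

lemma deriv_bumpSum (z : ℝ) :
    deriv (bumpSum s a r c) z = ∑ k ∈ s, c k * deriv (bump (r k)) (z - a k) := by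
  have hdiff (k : ι) : Differentiable ℝ fun z => bump (r k) (z - a k) :=
    ((contDiff_bump (r k)).differentiable one_ne_zero).comp (differentiable_id.sub_const (a k))
  refine (deriv_fun_sum fun k _ => ((hdiff k).const_mul (c k)) z).trans ?_
  refine Finset.sum_congr rfl fun k _ => ?_
  rw [deriv_const_mul _ (hdiff k z), deriv_comp_sub_const]

lemma ArcsDisjoint.radius_le (h : ArcsDisjoint (s : Set ι) (fun k => a k - r k) fun k => a k + r k)
    (hr : ∀ k ∈ s, 0 < r k) {k : ι} (hk : k ∈ s) : r k ≤ 1 / 2 := by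
  have := h k hk k hk 1 fun _ => one_ne_zero
  rw [Int.cast_one] at this
  have := hr k hk
  grind

lemma ArcsDisjoint.eq_of_bump_ne_zero
    (h : ArcsDisjoint (s : Set ι) (fun k => a k - r k) fun k => a k + r k)
    (hr : ∀ k ∈ s, 0 < r k) (z : ℝ) {k l : ι} (hk : k ∈ s) (hl : l ∈ s)
    (hbk : bump (r k) (z - a k) ≠ 0) (hbl : bump (r l) (z - a l) ≠ 0) : k = l := by
  obtain ⟨M, hM⟩ := exists_abs_sub_lt_of_bump_ne_zero (hr k hk) (h.radius_le hr hk) hbk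
  obtain ⟨N, hN⟩ := exists_abs_sub_lt_of_bump_ne_zero (hr l hl) (h.radius_le hr hl) hbl
  rw [abs_lt] at hM hN
  by_contra hkl
  rcases h k hk l hl (N - M) fun h => absurd h hkl with h' | h' <;> push_cast at h' <;> linarith

lemma bumpSum_apply (h : ArcsDisjoint (s : Set ι) (fun k => a k - r k) fun k => a k + r k)
    (hr : ∀ k ∈ s, 0 < r k) {k : ι} (hk : k ∈ s) : bumpSum s a r c (a k) = c k := by
  have hone : bump (r k) (a k - a k) = 1 := by rw [sub_self, bump_zero]
  rw [bumpSum, Finset.sum_eq_single_of_mem k hk fun l hl hlk => ?_, hone, mul_one]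
  rw [mul_eq_zero_of_right]
  by_contra hbl
  exact hlk (h.eq_of_bump_ne_zero hr (a k) hl hk hbl (hone ▸ one_ne_zero))

lemma bumpSum_eq_zero (h : ArcsDisjoint (s : Set ι) (fun k => a k - r k) fun k => a k + r k)
    (hr : ∀ k ∈ s, 0 < r k) {z : ℝ} (hz : ∀ k ∈ s, ∀ M : ℤ, r k ≤ |z - a k - M|) :
    bumpSum s a r c z = 0 := by
  refine Finset.sum_eq_zero fun k hk => mul_eq_zero_of_right _ ?_
  by_contra hb
  obtain ⟨M, hM⟩ := exists_abs_sub_lt_of_bump_ne_zero (hr k hk) (h.radius_le hr hk) hb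
  exact hM.not_ge (hz k hk M)

lemma abs_bumpSum_le (hδ : 0 ≤ δ) (hr : ∀ k ∈ s, 0 < r k)
    (h : ArcsDisjoint (s : Set ι) (fun k => a k - r k) fun k => a k + r k)
    (hc : ∀ k ∈ s, |c k| ≤ δ * r k) (z : ℝ) : |bumpSum s a r c z| ≤ δ := by
  refine abs_sum_le_of_ne_zero_unique hδ (fun k hk => ?_) fun k hk l hl hbk hbl =>
    h.eq_of_bump_ne_zero hr z hk hl (right_ne_zero_of_mul hbk) (right_ne_zero_of_mul hbl)
  calc |c k * bump (r k) (z - a k)| ≤ δ * r k * 1 := by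
        rw [abs_mul, abs_of_nonneg (bump_nonneg _ _)]
        exact mul_le_mul (hc k hk) (bump_le_one _ _) (bump_nonneg _ _)
          (mul_nonneg hδ (hr k hk).le)
    _ ≤ δ := by nlinarith [h.radius_le hr hk]

lemma abs_deriv_bumpSum_le (hδ : 0 ≤ δ) (hr : ∀ k ∈ s, 0 < r k)
    (h : ArcsDisjoint (s : Set ι) (fun k => a k - r k) fun k => a k + r k)
    (hc : ∀ k ∈ s, |c k| ≤ δ * r k) (z : ℝ) : |deriv (bumpSum s a r c) z| ≤ 7 * δ := by
  have hbump {k : ι} (hk : c k * deriv (bump (r k)) (z - a k) ≠ 0) : bump (r k) (z - a k) ≠ 0 :=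
    fun h₀ => right_ne_zero_of_mul hk (deriv_bump_eq_zero h₀)
  rw [deriv_bumpSum]
  refine abs_sum_le_of_ne_zero_unique (by positivity) (fun k hk => ?_) fun k hk l hl hbk hbl =>
    h.eq_of_bump_ne_zero hr z hk hl (hbump hbk) (hbump hbl)
  have hrk := hr k hk
  calc |c k * deriv (bump (r k)) (z - a k)| ≤ δ * r k * (7 / r k) := by
        rw [abs_mul]
        exact mul_le_mul (hc k hk) (abs_deriv_bump_le hrk (h.radius_le hr hk)) (abs_nonneg _)
          (by positivity)
    _ = 7 * δ := by field_simp

lemma exists_perturbation_of_pos (hδ : 0 ≤ δ) (hδ' : 7 * δ < 1) (hr : ∀ k ∈ s, 0 < r k)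
    (h : ArcsDisjoint (s : Set ι) (fun k => a k - r k) fun k => a k + r k)
    (hc : ∀ k ∈ s, |c k| ≤ δ * r k) :
    ∃ φ : CircleDiffeo, (∀ z, |φ z - z| ≤ δ) ∧ (∀ z, |deriv φ z - 1| ≤ 7 * δ) ∧
      (∀ k ∈ s, φ (a k) = a k + c k) ∧
      ∀ z, (∀ k ∈ s, ∀ M : ℤ, r k ≤ |z - a k - M|) → φ z = z := by
  have hderiv := abs_deriv_bumpSum_le hδ hr h hc
  refine ⟨.idAdd (bumpSum s a r c) contDiff_bumpSum bumpSum_add_one fun z => ?_, fun z => ?_,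
    fun z => ?_, fun k hk => ?_, fun z hz => ?_⟩
  · linarith [neg_le_of_abs_le (hderiv z)]
  · simpa only [CircleDiffeo.idAdd, add_sub_cancel_left] using abs_bumpSum_le hδ hr h hc z
  · rw [CircleDiffeo.idAdd, deriv_fun_add differentiableAt_fun_id
      (contDiff_bumpSum.differentiable one_ne_zero z), deriv_id'', add_sub_cancel_left]
    exact hderiv z
  · simp only [CircleDiffeo.idAdd, bumpSum_apply h hr hk]
  · simp only [CircleDiffeo.idAdd, bumpSum_eq_zero h hr hz, add_zero]

lemma exists_perturbation (hδ : 0 ≤ δ) (hδ' : 7 * δ < 1) (hr : ∀ k ∈ s, 0 ≤ r k)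
    (h : ArcsDisjoint (s : Set ι) (fun k => a k - r k) fun k => a k + r k)
    (hc : ∀ k ∈ s, |c k| ≤ δ * r k) :
    ∃ φ : CircleDiffeo, (∀ z, |φ z - z| ≤ δ) ∧ (∀ z, |deriv φ z - 1| ≤ 7 * δ) ∧
      ∀ k ∈ s, φ (a k) = a k + c k := by
  obtain ⟨φ, hφ, hφ', hφa, hφz⟩ := exists_perturbation_of_pos (s := s.filter (0 < r ·)) hδ hδ'
    (fun k hk => (Finset.mem_filter.1 hk).2)
    (fun k hk l hl => h k (Finset.mem_filter.1 hk).1 l (Finset.mem_filter.1 hl).1)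
    (fun k hk => hc k (Finset.mem_filter.1 hk).1)
  refine ⟨φ, hφ, hφ', fun k hk => ?_⟩
  rcases (hr k hk).lt_or_eq with hpos | hzero
  · exact hφa k (Finset.mem_filter.2 ⟨hk, hpos⟩)
  · have hck : c k = 0 := abs_nonpos_iff.1 ((hc k hk).trans_eq (by rw [← hzero, mul_zero]))
    rw [hck, add_zero, hφz]
    intro l hl M
    obtain ⟨hl, hl'⟩ := Finset.mem_filter.1 hl
    rcases h k hk l hl M (by rintro rfl; exact absurd hl' hzero.not_lt) with h' | h'
    · exact (by linarith : r l ≤ -(a k - a l - M)).trans (neg_le_abs _)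
    · exact (by linarith : r l ≤ a k - a l - M).trans (le_abs_self _)

end bumpSum

/-- The point `y` differs from `w ∈ [a, b]` by at most `δ` times the distance from `w` to the
complement of `[a, b]`. A perturbation of the identity supported in `[a, b]` and of `C¹` size `O(δ)`
then maps `w` to `y`. -/
def IsCorrection (δ a b w y : ℝ) : Prop :=
  w ∈ Icc a b ∧ |y - w| ≤ δ * min (w - a) (b - w)

lemma isCorrection_self {δ a b w : ℝ} (hδ : 0 ≤ δ) (hw : w ∈ Icc a b) : IsCorrection δ a b w w := by
  refine ⟨hw, ?_⟩
  rw [sub_self, abs_zero]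
  exact mul_nonneg hδ (le_min (sub_nonneg.2 hw.1) (sub_nonneg.2 hw.2))

namespace CircleDiffeo

variable {g : CircleDiffeo} {a b y : ℕ → ℝ} {n : ℕ} {δ : ℝ}

lemma exists_iterate_eq (hδ : 0 ≤ δ) (hδ' : 7 * δ < 1) (hab : ArcsDisjoint (Iic n) a b)
    (hy : ∀ k < n, IsCorrection δ (a (k + 1)) (b (k + 1)) (g (y k)) (y (k + 1))) :
    ∃ f : CircleDiffeo, (∀ z, |f z - g z| ≤ δ) ∧
      (∀ z, |deriv f z - deriv g z| ≤ 7 * δ * deriv g z) ∧ ∀ k ≤ n, f^[k] (y 0) = y k := by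
  have hdisj : ArcsDisjoint (Finset.range n : Set ℕ)
      (fun k => g (y k) - min (g (y k) - a (k + 1)) (b (k + 1) - g (y k)))
      fun k => g (y k) + min (g (y k) - a (k + 1)) (b (k + 1) - g (y k)) := by
    have hshift : ArcsDisjoint (Finset.range n : Set ℕ) (fun k => a (k + 1)) fun k => b (k + 1) :=
      fun k hk l hl M hM => hab (k + 1) (Finset.mem_range.1 hk) (l + 1) (Finset.mem_range.1 hl) M
        (by omega)
    refine hshift.mono (fun k _ => ?_) fun k _ => ?_
    · linarith [min_le_left (g (y k) - a (k + 1)) (b (k + 1) - g (y k))]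
    · linarith [min_le_right (g (y k) - a (k + 1)) (b (k + 1) - g (y k))]
  obtain ⟨φ, hφ, hφ', hφy⟩ := exists_perturbation (s := Finset.range n) (a := fun k => g (y k))
    (c := fun k => y (k + 1) - g (y k)) hδ hδ'
    (fun k hk => le_min (sub_nonneg.2 (hy k (Finset.mem_range.1 hk)).1.1)
      (sub_nonneg.2 (hy k (Finset.mem_range.1 hk)).1.2)) hdisj
    (fun k hk => (hy k (Finset.mem_range.1 hk)).2)
  refine ⟨φ.comp g, fun z => hφ (g z), fun z => ?_, fun k => ?_⟩
  · have hcomp : deriv (φ.comp g) z - deriv g z = (deriv φ (g z) - 1) * deriv g z := by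
      rw [sub_mul, one_mul]
      exact congrArg (· - _) (deriv_comp z (φ.differentiable _) (g.differentiable z))
    rw [hcomp, abs_mul, abs_of_pos (g.deriv_pos z)]
    exact mul_le_mul_of_nonneg_right (hφ' _) (g.deriv_pos z).le
  · induction k with
    | zero => exact fun _ => rfl
    | succ k ih =>
      intro hk
      rw [Function.iterate_succ_apply', ih (by omega)]
      exact (hφy k (Finset.mem_range.2 hk)).trans (add_sub_cancel _ _)

end CircleDiffeo

lemma exists_splitRatio_eq {a b R : ℝ} (hab : a < b) (hR : 0 < R) :
    ∃ x ∈ Ioo a b, splitRatio a x b = R := by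
  have : 0 < 1 + R := by positivity
  have hba := sub_pos.2 hab
  have hleft : (a + R * b) / (1 + R) - a = R * (b - a) / (1 + R) := by field_simp; ring
  have hright : b - (a + R * b) / (1 + R) = (b - a) / (1 + R) := by field_simp; ring
  refine ⟨(a + R * b) / (1 + R), ⟨sub_pos.1 ?_, sub_pos.1 ?_⟩, ?_⟩
  · rw [hleft]
    positivity
  · rw [hright]
    positivity
  · rw [splitRatio, hleft, hright]
    field_simp

lemma splitRatio_lt_splitRatio {a x y b : ℝ} (hax : a < x) (hxy : x < y) (hyb : y < b) :
    splitRatio a x b < splitRatio a y b := by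
  rw [splitRatio, splitRatio, div_lt_div_iff₀ (by linarith) (by linarith)]
  exact mul_lt_mul'' (by linarith) (by linarith) (by linarith) (by linarith)

/-- The point of `[a, b]` whose splitting ratio is `exp s` times that of `w`. -/
noncomputable def nudge (s a w b : ℝ) : ℝ :=
  (a * (b - w) + b * (Real.exp s * (w - a))) / (b - w + Real.exp s * (w - a))

section nudge

variable {s κ a w b : ℝ}

lemma nudge_den_pos (hw : w ∈ Ioo a b) : 0 < b - w + Real.exp s * (w - a) :=
  add_pos (sub_pos.2 hw.2) (mul_pos (Real.exp_pos s) (sub_pos.2 hw.1))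

lemma nudge_sub_left (hw : w ∈ Ioo a b) : nudge s a w b - a =
    Real.exp s * (w - a) * (b - a) / (b - w + Real.exp s * (w - a)) := by
  have := nudge_den_pos (s := s) hw
  rw [nudge]
  field_simp
  ring

lemma sub_nudge_right (hw : w ∈ Ioo a b) : b - nudge s a w b =
    (b - w) * (b - a) / (b - w + Real.exp s * (w - a)) := by
  have := nudge_den_pos (s := s) hw
  rw [nudge]
  field_simp
  ring

lemma nudge_mem_Ioo (hw : w ∈ Ioo a b) : nudge s a w b ∈ Ioo a b := by
  have := nudge_den_pos (s := s) hw
  have haw := sub_pos.2 hw.1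
  have hwb := sub_pos.2 hw.2
  have hab := sub_pos.2 (hw.1.trans hw.2)
  refine ⟨sub_pos.1 ?_, sub_pos.1 ?_⟩
  · rw [nudge_sub_left hw]
    positivity
  · rw [sub_nudge_right hw]
    positivity

lemma splitRatio_nudge (hw : w ∈ Ioo a b) :
    splitRatio a (nudge s a w b) b = Real.exp s * splitRatio a w b := by
  have hab : b - a ≠ 0 := (sub_pos.2 (hw.1.trans hw.2)).ne'
  rw [splitRatio, nudge_sub_left hw, sub_nudge_right hw,
    div_div_div_cancel_right₀ (nudge_den_pos hw).ne', mul_div_mul_right _ _ hab, splitRatio,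
    mul_div_assoc]

lemma abs_exp_sub_one_mul_max_le {x y : ℝ} (hx : 0 ≤ x) (hy : 0 ≤ y) (hs : |s| ≤ κ) :
    |Real.exp s - 1| * max x y ≤ (Real.exp κ - 1) * (y + Real.exp s * x) := by
  rw [abs_le] at hs
  have hpos := Real.exp_pos s
  rcases le_total 0 s with h | h
  · have hone := Real.one_le_exp h
    rw [abs_of_nonneg (by linarith)]
    have hmax : max x y ≤ y + Real.exp s * x := max_le (by nlinarith) (by nlinarith)
    have hexp : Real.exp s ≤ Real.exp κ := Real.exp_le_exp.2 hs.2
    gcongr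
    linarith
  · have hone := Real.exp_le_one_iff.2 h
    rw [abs_of_nonpos (by linarith)]
    have hmax : Real.exp s * max x y ≤ y + Real.exp s * x := by
      rw [mul_max_of_nonneg _ _ hpos.le]
      exact max_le (by nlinarith) (by nlinarith)
    have hexp : 1 ≤ Real.exp κ * Real.exp s := by
      rw [← Real.exp_add]
      exact Real.one_le_exp (by linarith)
    have hκ : 1 ≤ Real.exp κ := Real.one_le_exp (by linarith)
    calc -(Real.exp s - 1) * max x y
        ≤ (Real.exp κ - 1) * Real.exp s * max x y := by gcongr; linarith
      _ ≤ (Real.exp κ - 1) * (y + Real.exp s * x) := by rw [mul_assoc]; gcongr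

lemma isCorrection_nudge (hw : w ∈ Ioo a b) (hs : |s| ≤ κ) :
    IsCorrection (Real.exp κ - 1) a b w (nudge s a w b) := by
  refine ⟨Ioo_subset_Icc_self hw, ?_⟩
  have hden := nudge_den_pos (s := s) hw
  have haw := sub_pos.2 hw.1
  have hwb := sub_pos.2 hw.2
  have heq : nudge s a w b - w =
      (Real.exp s - 1) * (max (w - a) (b - w) * min (w - a) (b - w)) /
        (b - w + Real.exp s * (w - a)) := by
    rw [max_mul_min, nudge]
    field_simp
    ring
  rw [heq, abs_div, abs_of_pos hden, div_le_iff₀ hden, abs_mul,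
    abs_of_pos (mul_pos (lt_max_of_lt_left haw) (lt_min haw hwb)), ← mul_assoc,
    mul_right_comm _ (min _ _)]
  exact mul_le_mul_of_nonneg_right (abs_exp_sub_one_mul_max_le haw.le hwb.le hs)
    (lt_min haw hwb).le

end nudge

namespace CircleDiffeo

/-- The pseudo-orbit of `t` obtained by nudging each image by `s` in the corresponding image of
the interval `[a, b]`. -/
noncomputable def steer (g : CircleDiffeo) (s a b t : ℝ) : ℕ → ℝ
  | 0 => t
  | k + 1 => nudge s (g^[k + 1] a) (g (g.steer s a b t k)) (g^[k + 1] b)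

variable {g : CircleDiffeo} {a b t : ℝ}

lemma map_mem_Ioo_iterate {x : ℝ} {k : ℕ} (hx : x ∈ Ioo (g^[k] a) (g^[k] b)) :
    g x ∈ Ioo (g^[k + 1] a) (g^[k + 1] b) := by
  simpa only [Function.iterate_succ_apply', mem_Ioo, g.strictMono.lt_iff_lt] using hx

lemma steer_mem_Ioo (ht : t ∈ Ioo a b) (s : ℝ) (k : ℕ) :
    g.steer s a b t k ∈ Ioo (g^[k] a) (g^[k] b) := by
  induction k with
  | zero => exact ht
  | succ k ih => exact nudge_mem_Ioo (map_mem_Ioo_iterate ih)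

lemma continuous_steer (ht : t ∈ Ioo a b) (k : ℕ) :
    Continuous fun s => g.steer s a b t k := by
  induction k with
  | zero => exact continuous_const
  | succ k ih =>
    have hg := g.continuous.comp ih
    have hnum : Continuous fun s => Real.exp s * (g (g.steer s a b t k) - g^[k + 1] a) :=
      Real.continuous_exp.mul (hg.sub continuous_const)
    have hrem : Continuous fun s => g^[k + 1] b - g (g.steer s a b t k) := continuous_const.sub hg
    exact ((continuous_const.mul hrem).add (continuous_const.mul hnum)).div (hrem.add hnum)
      fun s => (nudge_den_pos (map_mem_Ioo_iterate (steer_mem_Ioo ht s k))).ne'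

lemma abs_log_splitRatio_map_sub_le {η C x : ℝ} (hC₀ : 0 ≤ C)
    (hC : ∀ a b, |g.logSlope a - g.logSlope b| ≤ η + C * |a - b|) (hx : x ∈ Ioo a b) :
    |Real.log (splitRatio (g a) (g x) (g b)) - Real.log (splitRatio a x b)| ≤
      η + C * (b - a) := by
  obtain ⟨z, hz, hzeq⟩ := g.exists_iterate_sub_eq_exp_mul 1 hx.1
  obtain ⟨w, hw, hweq⟩ := g.exists_iterate_sub_eq_exp_mul 1 hx.2
  simp only [Function.iterate_one, birkhoffSum_one] at hzeq hweq
  have hlog : Real.log (splitRatio (g a) (g x) (g b)) - Real.log (splitRatio a x b) =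
      g.logSlope z - g.logSlope w := by
    rw [splitRatio, hzeq, hweq, mul_div_mul_comm, ← Real.exp_sub, ← splitRatio,
      Real.log_mul (Real.exp_ne_zero _) (splitRatio_pos hx.1 hx.2).ne', Real.log_exp,
      add_sub_cancel_right]
  rw [hlog]
  refine (hC z w).trans (by gcongr; rw [abs_le]; constructor <;> linarith [hz.1, hz.2, hw.1, hw.2])

lemma abs_log_splitRatio_steer_sub_le {η C : ℝ} (hC₀ : 0 ≤ C)
    (hC : ∀ a b, |g.logSlope a - g.logSlope b| ≤ η + C * |a - b|) (ht : t ∈ Ioo a b) (s : ℝ)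
    (k : ℕ) :
    |Real.log (splitRatio (g^[k] a) (g.steer s a b t k) (g^[k] b)) -
        Real.log (splitRatio a t b) - k * s| ≤
      k * η + C * ∑ j ∈ Finset.range k, (g^[j] b - g^[j] a) := by
  induction k with
  | zero => simp [steer]
  | succ k ih =>
    have hmem := steer_mem_Ioo (g := g) ht s k
    have hmem' := map_mem_Ioo_iterate hmem
    have hstep := abs_log_splitRatio_map_sub_le hC₀ hC hmem
    rw [← Function.iterate_succ_apply' g, ← Function.iterate_succ_apply' g] at hstep
    rw [steer, splitRatio_nudge hmem', Real.log_mul (Real.exp_ne_zero s)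
      (splitRatio_pos hmem'.1 hmem'.2).ne', Real.log_exp, Finset.sum_range_succ]
    push_cast
    rw [abs_le] at ih hstep ⊢
    constructor <;> linarith [ih.1, ih.2, hstep.1, hstep.2]

lemma exists_steer_eq {η C κ r : ℝ} {m : ℕ} (hκ : 0 ≤ κ) (hC₀ : 0 ≤ C)
    (hC : ∀ a b, |g.logSlope a - g.logSlope b| ≤ η + C * |a - b|) (ht : t ∈ Ioo a b)
    (hr : r ∈ Ioo (g^[m] a) (g^[m] b))
    (hbound : |Real.log (splitRatio a t b)| + |Real.log (splitRatio (g^[m] a) r (g^[m] b))| +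
      (m * η + C * ∑ j ∈ Finset.range m, (g^[j] b - g^[j] a)) ≤ m * κ) :
    ∃ s, |s| ≤ κ ∧ g.steer s a b t m = r := by
  have hdrift (s : ℝ) := abs_le.1 (abs_log_splitRatio_steer_sub_le hC₀ hC ht s m)
  have hmem (s : ℝ) := steer_mem_Ioo (g := g) ht s m
  have hlog {x y : ℝ} (hx : g^[m] a < x) (hxy : x < y) (hy : y < g^[m] b) :=
    Real.log_lt_log (splitRatio_pos hx (hxy.trans hy)) (splitRatio_lt_splitRatio hx hxy hy)
  have ht' := abs_le.1 (le_refl |Real.log (splitRatio a t b)|)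
  have hr' := abs_le.1 (le_refl |Real.log (splitRatio (g^[m] a) r (g^[m] b))|)
  have hlow : g.steer (-κ) a b t m ≤ r := by
    by_contra! hlt
    linarith [(hdrift (-κ)).2, hlog hr.1 hlt (hmem (-κ)).2]
  have hhigh : r ≤ g.steer κ a b t m := by
    by_contra! hlt
    linarith [(hdrift κ).1, hlog (hmem κ).1 hlt hr.2]
  obtain ⟨s, hs, hsr⟩ := intermediate_value_Icc (neg_le_self hκ)
    (continuous_steer ht m).continuousOn ⟨hlow, hhigh⟩
  exact ⟨s, abs_le.2 hs, hsr⟩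

lemma isCorrection_steer {s κ : ℝ} (ht : t ∈ Ioo a b) (hs : |s| ≤ κ) (k : ℕ) :
    IsCorrection (Real.exp κ - 1) (g^[k + 1] a) (g^[k + 1] b) (g (g.steer s a b t k))
      (g.steer s a b t (k + 1)) :=
  isCorrection_nudge (map_mem_Ioo_iterate (steer_mem_Ioo ht s k)) hs

lemma exists_isCorrection_of_arcsDisjoint {η C κ r : ℝ} {A B : ℕ → ℝ} {i m : ℕ} (hκ : 0 ≤ κ)
    (hC₀ : 0 ≤ C) (hC : ∀ a b, |g.logSlope a - g.logSlope b| ≤ η + C * |a - b|)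
    (hA : ∀ j ≤ m, A (i + j) = g^[j] (A i)) (hB : ∀ j ≤ m, B (i + j) = g^[j] (B i))
    (hAB : ArcsDisjoint (Iio (i + m)) A B) (ht : t ∈ Ioo (A i) (B i))
    (hr : r ∈ Ioo (A (i + m)) (B (i + m)))
    (hbound : |Real.log (splitRatio (A i) t (B i))| +
      |Real.log (splitRatio (A (i + m)) r (B (i + m)))| + (m * η + C) ≤ m * κ) :
    ∃ Y : ℕ → ℝ, Y i = t ∧ Y (i + m) = r ∧
      (∀ k, i ≤ k → k ≤ i + m → Y k ∈ Ioo (A k) (B k)) ∧ ∀ k, i ≤ k → k < i + m →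
        IsCorrection (Real.exp κ - 1) (A (k + 1)) (B (k + 1)) (g (Y k)) (Y (k + 1)) := by
  have hlt (j : ℕ) : g^[j] (A i) < g^[j] (B i) := g.strictMono.iterate j (ht.1.trans ht.2)
  have hsum : ∑ j ∈ Finset.range m, (g^[j] (B i) - g^[j] (A i)) ≤ 1 := by
    refine ArcsDisjoint.sum_sub_le_one (fun k hk l hl M hM => ?_) fun j _ => (hlt j).le
    simp only [Finset.coe_range, mem_Iio] at hk hl
    have := hAB (i + k) (by rw [mem_Iio]; omega) (i + l) (by rw [mem_Iio]; omega) M (by omega)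
    rwa [hA k hk.le, hA l hl.le, hB k hk.le, hB l hl.le] at this
  rw [hA m le_rfl, hB m le_rfl] at hr hbound
  obtain ⟨s, hs, hsr⟩ := exists_steer_eq hκ hC₀ hC ht hr
    (by linarith [mul_le_mul_of_nonneg_left hsum hC₀])
  refine ⟨fun k => g.steer s (A i) (B i) t (k - i), by simp only [Nat.sub_self, steer],
    by simp only [Nat.add_sub_cancel_left, hsr], fun k hik hkm => ?_, fun k hik hkm => ?_⟩
  · obtain ⟨j, rfl⟩ := Nat.exists_eq_add_of_le hik
    rw [hA j (by omega), hB j (by omega)]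
    simpa only [Nat.add_sub_cancel_left] using steer_mem_Ioo ht s j
  · obtain ⟨j, rfl⟩ := Nat.exists_eq_add_of_le hik
    rw [add_assoc, hA _ (by omega), hB _ (by omega)]
    simpa only [Nat.add_sub_cancel_left] using isCorrection_steer ht hs j

end CircleDiffeo

lemma ArcsDisjoint.of_le {ι : Type*} [LinearOrder ι] {s : Set ι} {a b : ι → ℝ}
    (h : ∀ k ∈ s, ∀ l ∈ s, k ≤ l → ∀ M : ℤ, (k = l → M ≠ 0) → b k ≤ a l + M ∨ b l + M ≤ a k) :
    ArcsDisjoint s a b := by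
  intro k hk l hl M hM
  rcases le_total k l with hkl | hlk
  · exact h k hk l hl hkl M hM
  · have := h l hl k hk hlk (-M) fun hlk' => neg_ne_zero.2 (hM hlk'.symm)
    push_cast at this
    exact this.symm.imp (fun h' => by linarith) fun h' => by linarith

namespace FareyPair

variable {α : ℝ} (F : FareyPair α) (n m k : ℕ)

/-- The index of the left end of the arc of the orbit segment of length `n` around its `k`-th
point: a neighbour on the left if `k` is among the first or last `m` steps, and the point itself
otherwise. -/
def lower : ℕ × ℤ :=
  if k ≤ m then (k + F.v, -F.q) else if n ≤ k + m then (k - F.u, F.p) else (k, 0)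

/-- The index of the right end of the arc of the orbit segment of length `n` around its `k`-th
point, see `FareyPair.lower`. -/
def upper : ℕ × ℤ :=
  if k ≤ m then (k + F.u, -F.p) else if n ≤ k + m then (k - F.v, F.q) else (k, 0)

/-- The distance from `k α` to the left end of its arc. -/
noncomputable def lowerGap : ℝ :=
  if k ≤ m then F.downGap else if n ≤ k + m then F.upGap else 0

/-- The distance from `k α` to the right end of its arc. -/
noncomputable def upperGap : ℝ :=
  if k ≤ m then F.upGap else if n ≤ k + m then F.downGap else 0

lemma lowerGap_nonneg : 0 ≤ F.lowerGap n m k := by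
  rw [lowerGap]
  split_ifs
  exacts [F.downGap_pos.le, F.upGap_pos.le, le_rfl]

lemma upperGap_nonneg : 0 ≤ F.upperGap n m k := by
  rw [upperGap]
  split_ifs
  exacts [F.upGap_pos.le, F.downGap_pos.le, le_rfl]

namespace IsCharacteristic

variable {F} {n m k : ℕ} (h : F.IsCharacteristic n m)
include h

lemma rotationPt_lower : CircleDiffeo.rotationPt α (F.lower n m k) = k * α - F.lowerGap n m k := by
  have := h.u_add_lt
  simp only [lower, lowerGap, CircleDiffeo.rotationPt]
  split_ifs
  · push_cast
    rw [downGap]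
    ring
  · rw [Nat.cast_sub (by omega), upGap]
    ring
  · rw [Int.cast_zero]
    ring

lemma rotationPt_upper : CircleDiffeo.rotationPt α (F.upper n m k) = k * α + F.upperGap n m k := by
  have := h.v_add_lt
  simp only [upper, upperGap, CircleDiffeo.rotationPt]
  split_ifs
  · push_cast
    rw [upGap]
    ring
  · rw [Nat.cast_sub (by omega), downGap]
    ring
  · rw [Int.cast_zero]

lemma upGap_add_downGap_le_abs_sub {k l : ℕ} {M : ℤ} (hkl : k ≤ l) (hlk : l ≤ k + m)
    (hM : k = l → M ≠ 0) : F.upGap + F.downGap ≤ |l * α - k * α + M| := by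
  obtain ⟨-, hu, hv, huv, -⟩ := h
  have := le_abs_mul_add_intCast (N := m + 1) (l := l - k) (M := M) F.upGap_add_downGap_le_one
    (fun l hl hlm M => F.upGap_add_downGap_le_abs hl (by omega) (by omega) M)
    (abs_lt.2 (by omega)) (by omega)
  push_cast at this
  rwa [sub_mul] at this

lemma upperGap_add_lowerGap_le {k l : ℕ} {M : ℤ} (hkl : k ≤ l) (hl : l ≤ n)
    (hM : k = l → M ≠ 0) :
    F.upperGap n m k + F.lowerGap n m l ≤ l * α - k * α + M ∨
      l * α - k * α + M ≤ -(F.lowerGap n m k + F.upperGap n m l) := by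
  obtain ⟨-, hu, hv, huv, -⟩ := id h
  have := F.upGap_pos
  have := F.downGap_pos
  have hnear := fun hlk => le_abs.1 (h.upGap_add_downGap_le_abs_sub hkl hlk hM)
  have hmid : k < l → _ := fun hkl' =>
    F.upGap_le_or_le_neg_downGap (l := l - k) (by omega) (by omega) M
  have hfar : F.u + k < l → F.v + k < l → _ := fun hu hv =>
    F.two_mul_upGap_le_or_le_neg_two_mul_downGap (l := l - k) (by omega) (by omega) (by omega) M
  push_cast [sub_mul] at hmid hfar
  have hpoint := le_total 0 (l * α - k * α + M)
  simp only [upperGap, lowerGap]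
  split_ifs <;> first
    | omega
    | exact (hnear (by omega)).imp (fun h => by linarith) fun h => by linarith
    | exact (hfar (by omega) (by omega)).imp (fun h => by linarith) fun h => by linarith
    | exact (hmid (by omega)).imp (fun h => by linarith) fun h => by linarith
    | exact hpoint.imp (fun h => by linarith) fun h => by linarith

lemma arcsDisjoint_rotationPt : ArcsDisjoint (Iic n)
    (fun k => CircleDiffeo.rotationPt α (F.lower n m k))
    fun k => CircleDiffeo.rotationPt α (F.upper n m k) := by
  refine ArcsDisjoint.of_le fun k _ l hl hkl M hM => ?_
  simp only [h.rotationPt_lower, h.rotationPt_upper]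
  exact (h.upperGap_add_lowerGap_le hkl hl hM).imp (fun h' => by linarith) fun h' => by linarith

section orbit

variable {g : CircleDiffeo} (hg : hasRotationNumber g α) (hα : Irrational α) (s : ℝ)
include hg hα

lemma iterate_mem_Icc (k : ℕ) :
    g^[k] s ∈ Icc (g.orbitPt s (F.lower n m k)) (g.orbitPt s (F.upper n m k)) := by
  rw [← add_zero (g^[k] s), ← Int.cast_zero]
  refine ⟨CircleDiffeo.orbitPt_le_orbitPt hg hα s (b := (k, 0)) ?_,
    CircleDiffeo.orbitPt_le_orbitPt hg hα s (a := (k, 0)) ?_⟩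
  · rw [h.rotationPt_lower, CircleDiffeo.rotationPt, Int.cast_zero]
    linarith [F.lowerGap_nonneg n m k]
  · rw [h.rotationPt_upper, CircleDiffeo.rotationPt, Int.cast_zero]
    linarith [F.upperGap_nonneg n m k]

lemma isRotationOrdered {y : ℕ → ℝ} (hy : ∀ k ≤ n, y k = g^[k] s ∨
      y k ∈ Ioo (g.orbitPt s (F.lower n m k)) (g.orbitPt s (F.upper n m k))) :
    IsRotationOrdered α y n := by
  intro k hk l hl M N hMN
  rcases eq_or_ne k l with rfl | hkl
  · linarith
  have hrot : CircleDiffeo.rotationPt α (F.upper n m k) ≤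
      CircleDiffeo.rotationPt α (F.lower n m l) + (N - M : ℤ) := by
    refine (h.arcsDisjoint_rotationPt k hk l hl (N - M) fun h' => absurd h' hkl).resolve_right ?_
    simp only [h.rotationPt_lower, h.rotationPt_upper]
    push_cast
    linarith [F.lowerGap_nonneg n m k, F.upperGap_nonneg n m l]
  have horbit := CircleDiffeo.orbitPt_le_orbitPt_add hg hα s hrot
  push_cast at horbit
  have hσk := h.iterate_mem_Icc hg hα s k
  have hσl := h.iterate_mem_Icc hg hα s l
  rcases hy k hk with hyk | hyk <;> rcases hy l hl with hyl | hyl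
  · rw [hyk, hyl]
    exact CircleDiffeo.isRotationOrdered_iterate hg s n k hk l hl M N hMN
  · rw [hyk]
    linarith [hσk.2, hyl.1]
  · rw [hyl]
    linarith [hσl.1, hyk.2]
  · linarith [hyk.2, hyl.1]

end orbit

end IsCharacteristic

end FareyPair

lemma CircleDiffeo.iterate_orbitPt (f : CircleDiffeo) (x : ℝ) (j : ℕ) (a : ℕ × ℤ) :
    f^[j] (f.orbitPt x a) = f.orbitPt x (a.1 + j, a.2) := by
  rw [orbitPt, orbitPt, iterate_add_int, ← Function.iterate_add_apply, add_comm j]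

namespace FareyPair

variable {α : ℝ} {F : FareyPair α} {g : CircleDiffeo}

lemma exists_splitRatio_down_up_eq (hg : hasRotationNumber g α) (hα : Irrational α) (y : ℝ) {R : ℝ}
    (hR : 0 < R) : ∃ s, y ∈ Ioo (F.down g s) (F.up g s) ∧
      splitRatio (F.down g s) y (F.up g s) = R := by
  have hgap := F.upGap_add_downGap_le_one
  rw [upGap, downGap] at hgap
  have hwidth (s : ℝ) : F.up g s ≤ F.down g s + 1 := by
    have := CircleDiffeo.iterate_add_le_iterate_add hg hα s (k := F.u) (l := F.v) (M := -F.p)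
      (N := 1 - F.q) (by push_cast; linarith)
    push_cast at this
    rw [up, down]
    linarith
  have hcont : Continuous fun s => y - F.down g s - R * (F.up g s - y) := by
    have hup : Continuous (F.up g) := (g.continuous.iterate _).sub continuous_const
    have hdown : Continuous (F.down g) := (g.continuous.iterate _).sub continuous_const
    fun_prop
  obtain ⟨s, -, hs⟩ := intermediate_value_Icc' (show y - 1 ≤ y + 1 by linarith) hcont.continuousOn
    (show (0 : ℝ) ∈ Icc _ _ from ⟨by nlinarith [hwidth (y + 1), F.lt_up hg (y + 1)],
      by nlinarith [hwidth (y - 1), F.down_lt hg (y - 1)]⟩)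
  have hdu : F.down g s < F.up g s := (F.down_lt hg s).trans (F.lt_up hg s)
  have hyu : y < F.up g s := by
    by_contra! hle
    nlinarith
  have hdy : F.down g s < y := by nlinarith
  refine ⟨s, ⟨hdy, hyu⟩, ?_⟩
  rw [splitRatio, div_eq_iff (sub_pos.2 hyu).ne']
  linarith

lemma orbitPt_lower_of_le {n m k : ℕ} (s : ℝ) (hk : k ≤ m) :
    g.orbitPt s (F.lower n m k) = F.down g (g^[k] s) := by
  rw [lower, if_pos hk, CircleDiffeo.orbitPt, down, ← Function.iterate_add_apply, add_comm F.v,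
    Int.cast_neg, sub_eq_add_neg]

lemma orbitPt_upper_of_le {n m k : ℕ} (s : ℝ) (hk : k ≤ m) :
    g.orbitPt s (F.upper n m k) = F.up g (g^[k] s) := by
  rw [upper, if_pos hk, CircleDiffeo.orbitPt, up, ← Function.iterate_add_apply, add_comm F.u,
    Int.cast_neg, sub_eq_add_neg]

namespace IsCharacteristic

variable {n m : ℕ} (h : F.IsCharacteristic n m) {s : ℝ}

section ends

variable {k : ℕ}

include h

lemma lower_of_le_add (hk : n ≤ k + m) : F.lower n m k = (k - F.u, F.p) := by
  have := h.u_add_lt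
  rw [lower, if_neg (by omega), if_pos hk]

lemma upper_of_le_add (hk : n ≤ k + m) : F.upper n m k = (k - F.v, F.q) := by
  have := h.u_add_lt
  rw [upper, if_neg (by omega), if_pos hk]

lemma up_orbitPt_lower (hk : n ≤ k + m) : F.up g (g.orbitPt s (F.lower n m k)) = g^[k] s := by
  have := h.u_add_lt
  rw [h.lower_of_le_add hk, up, CircleDiffeo.iterate_orbitPt, CircleDiffeo.orbitPt,
    add_sub_cancel_right, Nat.sub_add_cancel (by omega)]

lemma down_orbitPt_upper (hk : n ≤ k + m) : F.down g (g.orbitPt s (F.upper n m k)) = g^[k] s := by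
  have := h.v_add_lt
  rw [h.upper_of_le_add hk, down, CircleDiffeo.iterate_orbitPt, CircleDiffeo.orbitPt,
    add_sub_cancel_right, Nat.sub_add_cancel (by omega)]

lemma orbitPt_lower_add {j : ℕ} (hj : k + j ≤ m ∨ n ≤ k + m) :
    g.orbitPt s (F.lower n m (k + j)) = g^[j] (g.orbitPt s (F.lower n m k)) := by
  have := h.u_add_lt
  rw [CircleDiffeo.iterate_orbitPt]
  simp only [lower]
  split_ifs <;> first | omega | (congr 2; omega)

lemma orbitPt_upper_add {j : ℕ} (hj : k + j ≤ m ∨ n ≤ k + m) :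
    g.orbitPt s (F.upper n m (k + j)) = g^[j] (g.orbitPt s (F.upper n m k)) := by
  have := h.v_add_lt
  rw [CircleDiffeo.iterate_orbitPt]
  simp only [upper]
  split_ifs <;> first | omega | (congr 2; omega)

end ends

variable {η C κ E : ℝ} (hg : hasRotationNumber g α) (hα : Irrational α) (hκ : 0 ≤ κ) (hC₀ : 0 ≤ C)
  (hC : ∀ a b, |g.logSlope a - g.logSlope b| ≤ η + C * |a - b|) (hE : F.ReturnRatioBound g E)
include h hg hα hκ hC₀ hC hE

lemma exists_initial_correction {y : ℝ} (hy : y ∈ Ioo (F.down g s) (F.up g s))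
    (hbound : |Real.log (splitRatio (F.down g s) y (F.up g s))| + E + (m * η + C) ≤ m * κ) :
    ∃ Y : ℕ → ℝ, Y 0 = y ∧ Y m = g^[m] s ∧
      (∀ k ≤ m, Y k ∈ Ioo (g.orbitPt s (F.lower n m k)) (g.orbitPt s (F.upper n m k))) ∧
      ∀ k < m, IsCorrection (Real.exp κ - 1) (g.orbitPt s (F.lower n m (k + 1)))
        (g.orbitPt s (F.upper n m (k + 1))) (g (Y k)) (Y (k + 1)) := by
  have := h.u_add_lt
  have harcs := CircleDiffeo.arcsDisjoint_orbitPt hg hα s h.arcsDisjoint_rotationPt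
  obtain ⟨Y, hY₀, hYm, hYmem, hY⟩ := CircleDiffeo.exists_isCorrection_of_arcsDisjoint
    (i := 0) (m := m) (t := y) (r := g^[m] s) hκ hC₀ hC
    (fun j hj => h.orbitPt_lower_add (s := s) (by omega))
    (fun j hj => h.orbitPt_upper_add (s := s) (by omega))
    (fun k hk l hl => harcs k (by rw [mem_Iio] at hk; rw [mem_Iic]; omega) l
      (by rw [mem_Iio] at hl; rw [mem_Iic]; omega))
    (by rwa [orbitPt_lower_of_le s m.zero_le, orbitPt_upper_of_le s m.zero_le])
    (by
      rw [zero_add, orbitPt_lower_of_le s le_rfl, orbitPt_upper_of_le s le_rfl]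
      exact ⟨F.down_lt hg _, F.lt_up hg _⟩)
    (by
      rw [zero_add, orbitPt_lower_of_le s le_rfl, orbitPt_upper_of_le s le_rfl,
        orbitPt_lower_of_le s m.zero_le, orbitPt_upper_of_le s m.zero_le]
      simp only [Function.iterate_zero_apply]
      linarith [hE.initial (g^[m] s)])
  rw [zero_add] at hYm hYmem hY
  exact ⟨Y, hY₀, hYm, fun k => hYmem k k.zero_le, fun k => hY k k.zero_le⟩

lemma exists_final_correction {z : ℝ}
    (hz : z ∈ Ioo (g.orbitPt s (F.lower n m n)) (g.orbitPt s (F.upper n m n)))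
    (hbound : |Real.log (splitRatio (g.orbitPt s (F.lower n m n)) z
      (g.orbitPt s (F.upper n m n)))| + E + (m * η + C) ≤ m * κ) :
    ∃ Y : ℕ → ℝ, Y (n - m) = g^[n - m] s ∧ Y n = z ∧
      (∀ k, n - m ≤ k → k ≤ n →
        Y k ∈ Ioo (g.orbitPt s (F.lower n m k)) (g.orbitPt s (F.upper n m k))) ∧
      ∀ k, n - m ≤ k → k < n → IsCorrection (Real.exp κ - 1) (g.orbitPt s (F.lower n m (k + 1)))
        (g.orbitPt s (F.upper n m (k + 1))) (g (Y k)) (Y (k + 1)) := by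
  have := h.u_add_lt
  have harcs := CircleDiffeo.arcsDisjoint_orbitPt hg hα s h.arcsDisjoint_rotationPt
  have hnm : n ≤ n - m + m := by omega
  have hnm' : n - m + m = n := by omega
  have hlow := h.up_orbitPt_lower (g := g) (s := s) hnm
  have hupp := h.down_orbitPt_upper (g := g) (s := s) hnm
  obtain ⟨Y, hY₀, hYm, hYmem, hY⟩ := CircleDiffeo.exists_isCorrection_of_arcsDisjoint
    (i := n - m) (m := m) (t := g^[n - m] s) (r := z) hκ hC₀ hC
    (fun _ _ => h.orbitPt_lower_add (s := s) (Or.inr hnm))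
    (fun _ _ => h.orbitPt_upper_add (s := s) (Or.inr hnm))
    (fun k hk l hl => harcs k (by rw [mem_Iio] at hk; rw [mem_Iic]; omega) l
      (by rw [mem_Iio] at hl; rw [mem_Iic]; omega))
    ⟨(F.lt_up hg _).trans_eq hlow, (F.down_lt hg _).trans_eq' hupp⟩ (by rwa [hnm'])
    (by
      rw [hnm']
      linarith [hE.final _ _ _ hlow hupp])
  rw [hnm'] at hYm hYmem hY
  exact ⟨Y, hY₀, hYm, hYmem, hY⟩

end IsCharacteristic

end FareyPair

namespace FareyPair.IsCharacteristic

variable {α : ℝ} {F : FareyPair α} {g : CircleDiffeo} {n m : ℕ} (h : F.IsCharacteristic n m)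

section pseudoOrbit

variable {η C κ E : ℝ} (hg : hasRotationNumber g α) (hα : Irrational α) (hκ : 0 ≤ κ) (hC₀ : 0 ≤ C)
  (hC : ∀ a b, |g.logSlope a - g.logSlope b| ≤ η + C * |a - b|) (hE : F.ReturnRatioBound g E)
include h hg hα hκ hC₀ hC hE

lemma exists_pseudoOrbit {s y z : ℝ} (hy : y ∈ Ioo (F.down g s) (F.up g s))
    (hy' : |Real.log (splitRatio (F.down g s) y (F.up g s))| + E + (m * η + C) ≤ m * κ)
    (hz : z ∈ Ioo (g.orbitPt s (F.lower n m n)) (g.orbitPt s (F.upper n m n)))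
    (hz' : |Real.log (splitRatio (g.orbitPt s (F.lower n m n)) z
      (g.orbitPt s (F.upper n m n)))| + E + (m * η + C) ≤ m * κ) :
    ∃ Y : ℕ → ℝ, Y 0 = y ∧ Y n = z ∧ (∀ k, m ≤ k → k + m ≤ n → Y k = g^[k] s) ∧
      (∀ k ≤ n, Y k = g^[k] s ∨
        Y k ∈ Ioo (g.orbitPt s (F.lower n m k)) (g.orbitPt s (F.upper n m k))) ∧
      ∀ k < n, IsCorrection (Real.exp κ - 1) (g.orbitPt s (F.lower n m (k + 1)))
        (g.orbitPt s (F.upper n m (k + 1))) (g (Y k)) (Y (k + 1)) := by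
  have := h.u_add_lt
  obtain ⟨Y₁, hY₁₀, hY₁m, hY₁mem, hY₁⟩ := h.exists_initial_correction hg hα hκ hC₀ hC hE hy hy'
  obtain ⟨Y₂, hY₂₀, hY₂n, hY₂mem, hY₂⟩ := h.exists_final_correction hg hα hκ hC₀ hC hE hz hz'
  let Y (k : ℕ) : ℝ := if k ≤ m then Y₁ k else if k + m ≤ n then g^[k] s else Y₂ k
  have hstart {k : ℕ} (hk : k ≤ m) : Y k = Y₁ k := if_pos hk
  have hmid {k : ℕ} (hk : m ≤ k) (hkn : k + m ≤ n) : Y k = g^[k] s := by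
    rcases hk.eq_or_lt with rfl | hk
    · rw [hstart le_rfl, hY₁m]
    · simp only [Y, if_neg hk.not_ge, if_pos hkn]
  have hend {k : ℕ} (hk : n ≤ k + m) : Y k = Y₂ k := by
    rcases hk.eq_or_lt with hk | hk
    · rw [hmid (by omega) hk.ge, show k = n - m by omega, hY₂₀]
    · simp only [Y, if_neg hk.not_ge, if_neg (show ¬k ≤ m by omega)]
  refine ⟨Y, (hstart m.zero_le).trans hY₁₀, (hend (by omega)).trans hY₂n, fun k => hmid,
    fun k hk => ?_, fun k hk => ?_⟩
  · rcases le_or_gt k m with hkm | hmk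
    · rw [hstart hkm]
      exact Or.inr (hY₁mem k hkm)
    rcases le_or_gt (k + m) n with hkn | hnk
    · exact Or.inl (hmid hmk.le hkn)
    · rw [hend hnk.le]
      exact Or.inr (hY₂mem k (by omega) hk)
  · rcases lt_or_ge k m with hkm | hmk
    · rw [hstart hkm.le, hstart hkm]
      exact hY₁ k hkm
    rcases lt_or_ge (k + m) n with hkn | hnk
    · rw [hmid hmk hkn.le, hmid (by omega) (by omega), ← Function.iterate_succ_apply' g]
      exact isCorrection_self (sub_nonneg.2 (Real.one_le_exp hκ))
        (h.iterate_mem_Icc hg hα s (k + 1))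
    · rw [hend hnk, hend (by omega)]
      exact hY₂ k (by omega) hk

lemma exists_initialRatio_eq_finalRatio_eq (hκ' : 7 * (Real.exp κ - 1) < 1) (y : ℝ) {R Q : ℝ}
    (hR : 0 < R) (hQ : 0 < Q) (hR' : |Real.log R| + E + (m * η + C) ≤ m * κ)
    (hQ' : |Real.log Q| + E + (m * η + C) ≤ m * κ) :
    ∃ f : CircleDiffeo, (∀ z, |f z - g z| ≤ Real.exp κ - 1) ∧
      (∀ z, |deriv f z - deriv g z| ≤ 7 * (Real.exp κ - 1) * deriv g z) ∧
      IsRotationOrdered α (fun k => f^[k] y) n ∧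
      initialRatio f y n (n - F.u) (n - F.v) = R ∧ finalRatio f y n (n - F.u) (n - F.v) = Q := by
  obtain ⟨-, hu, hv, huv, -⟩ := id h
  obtain ⟨s, hys, hs⟩ := exists_splitRatio_down_up_eq (F := F) hg hα y hR
  have hn : n ≤ n + m := by omega
  have hlow := h.up_orbitPt_lower (g := g) (s := s) hn
  have hupp := h.down_orbitPt_upper (g := g) (s := s) hn
  obtain ⟨z, hz, hzQ⟩ := exists_splitRatio_eq
    (((F.lt_up hg _).trans_eq hlow).trans ((F.down_lt hg _).trans_eq' hupp)) hQ
  obtain ⟨Y, rfl, rfl, hmid, hmem, hY⟩ := h.exists_pseudoOrbit hg hα hκ hC₀ hC hE hys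
    (by rwa [hs]) hz (by rwa [hzQ])
  obtain ⟨f, hfg, hfg', hf⟩ := CircleDiffeo.exists_iterate_eq
    (sub_nonneg.2 (Real.one_le_exp hκ)) hκ'
    (CircleDiffeo.arcsDisjoint_orbitPt hg hα s h.arcsDisjoint_rotationPt) hY
  have hord : IsRotationOrdered α (fun k => f^[k] (Y 0)) n := by
    refine h.isRotationOrdered hg hα s fun k hk => ?_
    rw [hf k hk]
    exact hmem k hk
  have hf_mid {k : ℕ} (hk : m ≤ k) (hkn : k + m ≤ n) : f^[k] (Y 0) = g^[k] s :=
    (hf k (by omega)).trans (hmid k hk hkn)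
  refine ⟨f, hfg, hfg', hord, ?_, ?_⟩
  · rw [initialRatio_eq (by omega) (by omega) (by omega) hord, hf_mid (by omega) (by omega),
      hf_mid (by omega) (by omega)]
    exact hs
  · rw [finalRatio_eq (by omega) (by omega) (by omega) hord, hf n le_rfl,
      hf_mid (by omega) (by omega), hf_mid (by omega) (by omega), ← hzQ, h.lower_of_le_add hn,
      h.upper_of_le_add hn]
    rfl

end pseudoOrbit

include h in
lemma isAdaptedSeg (hα : Irrational α) {f : ℝ → ℝ} {x : ℝ}
    (hf : IsRotationOrdered α (fun k => f^[k] x) n) :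
    IsAdaptedSeg f x n (n - F.u) (n - F.v) := by
  obtain ⟨-, hu, hv, huv, -⟩ := h
  exact F.isAdaptedSeg hα (by omega) (by omega) huv hf

variable {f : CircleDiffeo} (hf : hasRotationNumber f α) (x : ℝ)
include h hf

lemma initialRatio_eq_splitRatio :
    initialRatio f x n (n - F.u) (n - F.v) = splitRatio (F.down f x) x (F.up f x) := by
  obtain ⟨-, hu, hv, huv, -⟩ := h
  exact initialRatio_eq (by omega) (by omega) (by omega)
    (CircleDiffeo.isRotationOrdered_iterate hf x n)

lemma finalRatio_eq_splitRatio : finalRatio f x n (n - F.u) (n - F.v) =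
    splitRatio (f.orbitPt x (F.lower n m n)) (f^[n] x) (f.orbitPt x (F.upper n m n)) := by
  rw [h.lower_of_le_add (by omega), h.upper_of_le_add (by omega)]
  obtain ⟨-, hu, hv, huv, -⟩ := h
  exact finalRatio_eq (by omega) (by omega) (by omega)
    (CircleDiffeo.isRotationOrdered_iterate hf x n)

lemma initialRatio_pos : 0 < initialRatio f x n (n - F.u) (n - F.v) := by
  rw [h.initialRatio_eq_splitRatio hf x]
  exact splitRatio_pos (F.down_lt hf x) (F.lt_up hf x)

lemma finalRatio_pos : 0 < finalRatio f x n (n - F.u) (n - F.v) := by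
  rw [h.finalRatio_eq_splitRatio hf x]
  exact splitRatio_pos ((F.lt_up hf _).trans_eq (h.up_orbitPt_lower (by omega)))
    ((F.down_lt hf _).trans_eq' (h.down_orbitPt_upper (by omega)))

lemma abs_log_initialRatio_le {E : ℝ} (hE : F.ReturnRatioBound f E) :
    |Real.log (initialRatio f x n (n - F.u) (n - F.v))| ≤ E := by
  rw [h.initialRatio_eq_splitRatio hf x]
  exact hE.initial x

lemma abs_log_finalRatio_le {E : ℝ} (hE : F.ReturnRatioBound f E) :
    |Real.log (finalRatio f x n (n - F.u) (n - F.v))| ≤ E := by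
  rw [h.finalRatio_eq_splitRatio hf x]
  exact hE.final _ _ _ (h.up_orbitPt_lower (by omega)) (h.down_orbitPt_upper (by omega))

end FareyPair.IsCharacteristic

lemma distC1_le {f g : ℝ → ℝ} {A B : ℝ} (hA : ∀ z ∈ Icc (0 : ℝ) 1, |f z - g z| ≤ A)
    (hB : ∀ z ∈ Icc (0 : ℝ) 1, |deriv f z - deriv g z| ≤ B) : distC1 f g ≤ A + B :=
  have : Nonempty (Icc (0 : ℝ) 1) := ⟨⟨0, by simp⟩⟩
  add_le_add (ciSup_le fun z => hA z z.2) (ciSup_le fun z => hB z z.2)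

namespace CircleDiffeo

lemma exists_distC1_lt (g : CircleDiffeo) {ε : ℝ} (hε : 0 < ε) :
    ∃ κ > 0, 7 * (Real.exp κ - 1) < 1 ∧ ∀ f : CircleDiffeo, (∀ z, |f z - g z| ≤ Real.exp κ - 1) →
      (∀ z, |deriv f z - deriv g z| ≤ 7 * (Real.exp κ - 1) * deriv g z) → distC1 f g < ε := by
  obtain ⟨D, hD⟩ := isCompact_Icc.exists_bound_of_continuousOn (s := Icc (0 : ℝ) 1)
    (g.contDiff.continuous_deriv le_rfl).continuousOn
  have hsmall : ∀ᶠ κ in nhdsWithin 0 (Ioi 0), 7 * (Real.exp κ - 1) < 1 ∧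
      Real.exp κ - 1 + 7 * (Real.exp κ - 1) * D < ε := by
    refine Eventually.filter_mono nhdsWithin_le_nhds (.and ?_ ?_)
    · have : Continuous fun κ => 7 * (Real.exp κ - 1) := by fun_prop
      exact (this.tendsto' 0 0 (by simp)).eventually_lt_const one_pos
    · have : Continuous fun κ => Real.exp κ - 1 + 7 * (Real.exp κ - 1) * D := by fun_prop
      exact (this.tendsto' 0 0 (by simp)).eventually_lt_const hε
  obtain ⟨κ, ⟨hκ₁, hκε⟩, hκ₀⟩ := (hsmall.and self_mem_nhdsWithin).exists
  have := Real.one_le_exp (le_of_lt hκ₀)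
  refine ⟨κ, hκ₀, hκ₁, fun f hfg hfg' => (distC1_le (fun z _ => hfg z) fun z hz => ?_).trans_lt hκε⟩
  exact (hfg' z).trans
    (mul_le_mul_of_nonneg_left ((le_abs_self _).trans (hD z hz)) (by linarith))

lemma exists_forall_ratio_eq {α : ℝ} (hα : Irrational α) {f g : CircleDiffeo}
    (hf : hasRotationNumber f α) (hg : hasRotationNumber g α) {ε : ℝ} (hε : 0 < ε) :
    ∃ m₀ : ℕ, ∀ (F : FareyPair α) (n m : ℕ), F.IsCharacteristic n m → m₀ ≤ m →
      ∀ x y, ∃ h : CircleDiffeo, distC1 h g < ε ∧ IsRotationOrdered α (fun k => h^[k] y) n ∧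
        initialRatio h y n (n - F.u) (n - F.v) = initialRatio f x n (n - F.u) (n - F.v) ∧
        finalRatio h y n (n - F.u) (n - F.v) = finalRatio f x n (n - F.u) (n - F.v) := by
  obtain ⟨κ, hκ, hκ', hclose⟩ := g.exists_distC1_lt hε
  have hκ₄ : 0 < κ / 4 := by positivity
  obtain ⟨C, hC₀, hC⟩ := g.exists_abs_logSlope_sub_le hκ₄
  obtain ⟨mf, hmf⟩ := FareyPair.exists_forall_returnRatioBound hα hf hκ₄
  obtain ⟨mg, hmg⟩ := FareyPair.exists_forall_returnRatioBound hα hg hκ₄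
  obtain ⟨mC, hmC⟩ := exists_nat_ge (C / (κ / 4))
  refine ⟨max mf (max mg mC), fun F n m hF hm x y => ?_⟩
  simp only [max_le_iff] at hm
  have hCm : C ≤ m * (κ / 4) :=
    (div_le_iff₀ hκ₄).1 (hmC.trans (Nat.cast_le.2 hm.2.2))
  have hfE := hmf F n m hF hm.1
  obtain ⟨h, hhg, hhg', hord, hinit, hfin⟩ := hF.exists_initialRatio_eq_finalRatio_eq hg hα hκ.le
    hC₀ hC (hmg F n m hF hm.2.1) hκ' y (hF.initialRatio_pos hf x) (hF.finalRatio_pos hf x)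
    (by linarith [hF.abs_log_initialRatio_le hf x hfE])
    (by linarith [hF.abs_log_finalRatio_le hf x hfE])
  exact ⟨h, hclose h hhg hhg', hord, hinit, hfin⟩

end CircleDiffeo

/-- **Theorem (characteristic times).** For any irrational `α` there is a strictly
increasing sequence `(kᵢ)` of natural numbers such that, for any `C¹`-diffeomorphisms
`f`, `g` with rotation number `α`, any points `x`, `y` and any `ε > 0` :
(i) all orbit segments of length `kᵢ` are adapted; (ii) for all large `i` some
`gᵢ` `ε`-`C¹`-close to `g` has `{y,…,gᵢ^{kᵢ}(y)}` adapted, ordered as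
`{x,…,f^{kᵢ}(x)}` and as `{y,…,g^{kᵢ}(y)}`, with the same initial and final ratios
as `f` on `{x,…,f^{kᵢ}(x)}`. -/
theorem characteristic_times (α : ℝ) (hα : Irrational α) :
    ∃ k : ℕ → ℕ, StrictMono k ∧
      ∀ (f g : CircleDiffeo), hasRotationNumber f α → hasRotationNumber g α →
      ∀ (x y : ℝ) (ε : ℝ), 0 < ε →
        (∀ i : ℕ, (∃ I J : ℕ, IsAdaptedSeg f.toFun x (k i) I J) ∧
          (∃ I J : ℕ, IsAdaptedSeg g.toFun y (k i) I J)) ∧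
        (∃ i₀ : ℕ, ∀ i : ℕ, i₀ ≤ i → ∃ gi : CircleDiffeo,
          distC1 gi.toFun g.toFun < ε ∧
          SimilarlyOrdered (fun m => f.toFun^[m] x) (fun m => gi.toFun^[m] y) (k i) ∧
          SimilarlyOrdered (fun m => g.toFun^[m] y) (fun m => gi.toFun^[m] y) (k i) ∧
          ∃ I J : ℕ, IsAdaptedSeg f.toFun x (k i) I J ∧
            IsAdaptedSeg gi.toFun y (k i) I J ∧
            initialRatio gi.toFun y (k i) I J = initialRatio f.toFun x (k i) I J ∧
            finalRatio gi.toFun y (k i) I J = finalRatio f.toFun x (k i) I J) := by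
  obtain ⟨k, hk, hchar⟩ := exists_characteristic_times hα
  refine ⟨k, hk, fun f g hf hg x y ε hε => ⟨fun i => ?_, ?_⟩⟩
  · obtain ⟨F, m, hF, -⟩ := hchar i
    exact ⟨⟨_, _, hF.isAdaptedSeg hα (CircleDiffeo.isRotationOrdered_iterate hf x _)⟩,
      ⟨_, _, hF.isAdaptedSeg hα (CircleDiffeo.isRotationOrdered_iterate hg y _)⟩⟩
  obtain ⟨i₀, hi₀⟩ := CircleDiffeo.exists_forall_ratio_eq hα hf hg hε
  refine ⟨i₀, fun i hi => ?_⟩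
  obtain ⟨F, m, hF, him⟩ := hchar i
  obtain ⟨gi, hclose, hord, hinit, hfin⟩ := hi₀ F (k i) m hF (hi.trans him) x y
  have hford := CircleDiffeo.isRotationOrdered_iterate hf x (k i)
  have hgord := CircleDiffeo.isRotationOrdered_iterate hg y (k i)
  exact ⟨gi, hclose, hford.similarlyOrdered hα hord, hgord.similarlyOrdered hα hord, _, _,
    hF.isAdaptedSeg hα hford, hF.isAdaptedSeg hα hord, hinit, hfin⟩
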